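/- arXiv:1508.05062 — 3 statements merged into one kernel-verified Lean document; each statement's English description precedes it below -/
import Mathlib

section
/- If Σ_{i=2}^{∞} p_i F_{2(i−1)} < +∞, then the nonnegative sequence μ defined by μ_0 = 1 and μ_i = ξ_i for i ≥ 1 is summable (μ ∈ ℓ¹(ℕ)) and satisfies μS = μ; hence the Markov chain with transition matrix S admits an invariant probability measure and is positive recurrent. -/
/-- Fibonacci sequence with `F 0 = 1`, `F 1 = 2`, `F (n+2) = F (n+1) + F n`. -/
def fibF : ℕ → ℕ
  | 0 => 1
  | 1 => 2
  | (n+2) => fibF (n+1) + fibF n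

lemma fibF_pos : ∀ n, 0 < fibF n
  | 0 => by simp [fibF]
  | 1 => by simp [fibF]
  | (n+2) => by
      have h1 := fibF_pos (n+1)
      simp only [fibF]
      omega

/-- Zeckendorf digits of `N` in the base `fibF`: `N = ∑ i, zeck N i * fibF i`,
with `zeck N i ∈ {0,1}` and no two consecutive `1`'s. -/
def zeck (N i : ℕ) : ℕ :=
  if h : N = 0 then 0
  else if i = Nat.findGreatest (fun j => fibF j ≤ N) N then 1
  else zeck (N - fibF (Nat.findGreatest (fun j => fibF j ≤ N) N)) i
termination_by N
decreasing_by
  exact Nat.sub_lt (Nat.pos_of_ne_zero h) (fibF_pos _)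

lemma zeck_eq_zero_of_lt : ∀ N, ∀ i, N < i → zeck N i = 0 := by
  intro N
  induction N using Nat.strong_induction_on with
  | _ N ih =>
    intro i hi
    rw [zeck]
    split
    · rfl
    · rename_i h
      have hkN : Nat.findGreatest (fun j => fibF j ≤ N) N ≤ N := Nat.findGreatest_le N
      rw [if_neg (by omega)]
      exact ih _ (Nat.sub_lt (Nat.pos_of_ne_zero h) (fibF_pos _)) i
        (lt_of_le_of_lt (Nat.sub_le _ _) hi)

lemma exists_break0 (N : ℕ) : ∃ i, ¬(zeck N (2*i+1) = 1 ∧ zeck N (2*i) = 0) := by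
  refine ⟨N + 1, ?_⟩
  have h : zeck N (2*(N+1)+1) = 0 := zeck_eq_zero_of_lt N _ (by omega)
  simp [h]

lemma exists_break1 (N : ℕ) : ∃ i, ¬(zeck N (2*i+2) = 1 ∧ zeck N (2*i+1) = 0) := by
  refine ⟨N + 1, ?_⟩
  have h : zeck N (2*(N+1)+2) = 0 := zeck_eq_zero_of_lt N _ (by omega)
  simp [h]

/-- The number `s` of `10`-blocks carried in the stochastic Fibonacci adding machine:
if the digits of `N` end with `00(10)^s` (case `ε₀ = 0`) or with `00(10)^s1`
(case `ε₀ = 1`), this returns `s`. -/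
def carryLen (N : ℕ) : ℕ :=
  if zeck N 0 = 0 then Nat.find (exists_break0 N) else Nat.find (exists_break1 N)

/-- `Pprod p t = p 1 * p 2 * ⋯ * p t`. -/
def Pprod (p : ℕ → ℝ) (t : ℕ) : ℝ := ∏ i ∈ Finset.Icc 1 t, p i

/-- The transition matrix `S` of the Fibonacci stochastic adding machine associated to
the probability sequence `p`:  `S N N = 1 - p 1`;  if the digits of `N` end with
`00(10)^s` then `S N (N+1) = p 1 ⋯ p (s+1)` and `S N (N+1-F (2m)) = p 1 ⋯ p m * (1 - p (m+1))`
for `1 ≤ m ≤ s`;  if the digits of `N` end with `00(10)^s1` then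
`S N (N+1) = p 1 ⋯ p (s+2)` and `S N (N+1-F (2m-1)) = p 1 ⋯ p m * (1 - p (m+1))` for
`1 ≤ m ≤ s+1`;  all other entries vanish. -/
noncomputable def Smat (p : ℕ → ℝ) (N M : ℕ) : ℝ :=
  (if M = N then 1 - p 1 else 0) +
  if zeck N 0 = 0 then
    (if M = N + 1 then Pprod p (carryLen N + 1) else 0) +
    ∑ m ∈ Finset.Icc 1 (carryLen N),
      (if M = N + 1 - fibF (2*m) then Pprod p m * (1 - p (m+1)) else 0)
  else
    (if M = N + 1 then Pprod p (carryLen N + 2) else 0) +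
    ∑ m ∈ Finset.Icc 1 (carryLen N + 1),
      (if M = N + 1 - fibF (2*m - 1) then Pprod p m * (1 - p (m+1)) else 0)

/-- `xiF p n = ξ_{F_n}`: `ξ_{F_0} = ξ_1 = 1` and `ξ_{F_n} = p (⌊(n+1)/2⌋+1)` for `n ≥ 1`. -/
noncomputable def xiF (p : ℕ → ℝ) (n : ℕ) : ℝ := if n = 0 then 1 else p ((n+1)/2 + 1)

/-- `xi p N = ξ_N = ∏ᵢ ξ_{F_i}^{ε_i(N)}` where `(ε_i(N))` are the Zeckendorf digits of `N`
(the unique sequence with `ξ 1 = 1`, `ξ 2 = p 2`, `ξ (F n) = p (⌊(n+1)/2⌋+1)` and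
`ξ (F n + k) = ξ (F n) * ξ k` for `1 ≤ k ≤ F (n-1) - 1`); also `xi p 0 = 1`. -/
noncomputable def xi (p : ℕ → ℝ) (N : ℕ) : ℝ :=
  ∏ i ∈ Finset.range (N+1), (xiF p i) ^ (zeck N i)

/-!
Read on supports of Zeckendorf expansions, `ξ N` is the product of the `ξ (F i)` over the support
of `N`. Distinct `N` have distinct supports, so `∑ ξ N` is a subseries of the sum of the
corresponding products over all finite sets of positions, which converges as soon as `∑ p i` does.

For the invariance, fix a state `M` with lowest digit `1` at position `r` (`r = ∞` if `M = 0`). The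
states from which `M` is reached by an interrupted addition are the `N = M + F n - 1` with
`0 < n < r`, whose digits are those of `M` above `n` and alternate below. Their contribution
`ξ N * S N M` is `ξ M * (w n - w (n + 1))`, where `w 0 = p 1` and `w (n + 1) = w n * ξ (F n)`; this
vanishes for `n = 0`. The sum telescopes to `ξ M * (p 1 - w r)`; the uninterrupted addition
`M - 1 ↦ M` contributes `ξ M * w r`, and staying at `M` contributes `ξ M * (1 - p 1)`. For `M = 0`
there is no uninterrupted addition, but `w n → 0`.
-/

open Finset

section Zeckendorf

lemma fibF_eq_fib : ∀ n, fibF n = Nat.fib (n + 2)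
  | 0 => rfl
  | 1 => rfl
  | n + 2 => by
    rw [fibF, fibF_eq_fib n, fibF_eq_fib (n + 1), Nat.fib_add_two (n := n + 2), add_comm]

lemma fibF_injective : Function.Injective fibF := by
  rw [funext fibF_eq_fib]
  exact Nat.fib_add_two_strictMono.injective

lemma isZeckendorfRep_iff_pairwise {l : List ℕ} :
    l.IsZeckendorfRep ↔ (∀ a ∈ l, 2 ≤ a) ∧ l.Pairwise fun a b ↦ b + 2 ≤ a := by
  have : IsTrans ℕ fun a b ↦ b + 2 ≤ a := ⟨fun _ _ _ hab hbc ↦ by omega⟩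
  simp [List.IsZeckendorfRep, List.isChain_iff_pairwise, List.pairwise_append, and_comm]

/-- A finite set of positions is sparse if it contains no two consecutive integers: these are the
supports of the digit sequences admitted in Zeckendorf's theorem. -/
def IsSparse (A : Finset ℕ) : Prop := ∀ i ∈ A, i + 1 ∉ A

lemma IsSparse.mono {A B : Finset ℕ} (hB : IsSparse B) (hAB : A ⊆ B) : IsSparse A :=
  fun i hi hi' ↦ hB i (hAB hi) (hAB hi')

lemma IsSparse.isZeckendorfRep_sort {A : Finset ℕ} (hA : IsSparse A) :
    ((A.map (addRightEmbedding 2)).sort (· ≥ ·)).IsZeckendorfRep := by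
  refine isZeckendorfRep_iff_pairwise.2 ⟨by simp, ?_⟩
  refine (sortedGT_sort _).pairwise.imp_of_mem fun {a b} ha hb hab ↦ ?_
  simp only [mem_sort, mem_map, addRightEmbedding_apply] at ha hb
  obtain ⟨i, hi, rfl⟩ := ha
  obtain ⟨k, hk, rfl⟩ := hb
  have : i ≠ k + 1 := fun h ↦ hA k hk (h ▸ hi)
  omega

lemma findGreatest_fibF_add_two {N : ℕ} (hN : N ≠ 0) :
    Nat.findGreatest (fun j ↦ fibF j ≤ N) N + 2 = N.greatestFib := by
  have two_le : 2 ≤ N.greatestFib := by simpa [Nat.one_le_iff_ne_zero] using hN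
  obtain ⟨g, hg⟩ := Nat.exists_eq_add_of_le' two_le
  have fib_le : Nat.fib (g + 2) ≤ N := hg ▸ N.fib_greatestFib_le
  have g_le : g ≤ N := by have := (g + 2).le_fib_add_one; omega
  rw [hg, Nat.add_right_cancel_iff, Nat.findGreatest_eq_iff]
  refine ⟨g_le, fun _ ↦ (fibF_eq_fib g).trans_le fib_le, fun n hn _ hle ↦ ?_⟩
  rw [fibF_eq_fib, ← Nat.le_greatestFib] at hle
  omega

lemma zeck_eq_ite_mem_zeckendorf (N i : ℕ) :
    zeck N i = if i + 2 ∈ N.zeckendorf then 1 else 0 := by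
  induction N using Nat.strong_induction_on with
  | _ N ih =>
    rw [zeck]
    by_cases hN : N = 0
    · simp [hN]
    set g := Nat.findGreatest (fun j ↦ fibF j ≤ N) N
    have hgreatest : N.greatestFib = g + 2 := (findGreatest_fibF_add_two hN).symm
    rw [dif_neg hN, ih _ (Nat.sub_lt (Nat.pos_of_ne_zero hN) (fibF_pos _)),
      Nat.zeckendorf_of_pos (Nat.pos_of_ne_zero hN), hgreatest, ← fibF_eq_fib]
    by_cases hi : i = g <;> simp [hi]

/-- The set of positions at which the Zeckendorf expansion of `N` has the digit `1`. -/
def zeckSupport (N : ℕ) : Finset ℕ := {i ∈ range (N + 1) | zeck N i = 1}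

lemma mem_zeckSupport {N i : ℕ} : i ∈ zeckSupport N ↔ zeck N i = 1 := by
  have : zeck N i = 1 → i < N + 1 := fun h ↦ by
    by_contra! hlt
    simp [zeck_eq_zero_of_lt N i hlt] at h
  simpa [zeckSupport] using this

lemma mem_zeckSupport_iff_mem_zeckendorf {N i : ℕ} :
    i ∈ zeckSupport N ↔ i + 2 ∈ N.zeckendorf := by
  simp [mem_zeckSupport, zeck_eq_ite_mem_zeckendorf]

lemma zeck_eq_ite (N i : ℕ) : zeck N i = if i ∈ zeckSupport N then 1 else 0 := by
  simp only [mem_zeckSupport_iff_mem_zeckendorf, zeck_eq_ite_mem_zeckendorf]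

lemma isSparse_zeckSupport (N : ℕ) : IsSparse (zeckSupport N) := by
  intro i hi hi'
  rw [mem_zeckSupport_iff_mem_zeckendorf] at hi hi'
  have : Std.Symm fun a b : ℕ ↦ b ≠ a + 1 ∧ a ≠ b + 1 := ⟨fun _ _ ↦ And.symm⟩
  have hnonadj : N.zeckendorf.Pairwise fun a b ↦ b ≠ a + 1 ∧ a ≠ b + 1 :=
    (isZeckendorfRep_iff_pairwise.1 N.isZeckendorfRep_zeckendorf).2.imp (by omega)
  exact (hnonadj.forall hi hi' (by omega)).1 rfl

lemma map_zeckSupport (N : ℕ) :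
    (zeckSupport N).map (addRightEmbedding 2) = N.zeckendorf.toFinset := by
  ext k
  have two_le := (isZeckendorfRep_iff_pairwise.1 N.isZeckendorfRep_zeckendorf).1 k
  simp only [mem_map, mem_zeckSupport_iff_mem_zeckendorf, addRightEmbedding_apply,
    List.mem_toFinset]
  exact ⟨by rintro ⟨i, hi, rfl⟩; exact hi, fun hk ↦ ⟨k - 2, by simp [two_le hk, hk]⟩⟩

lemma sum_fibF_eq_sum_map_fib (A : Finset ℕ) :
    ∑ i ∈ A, fibF i = ∑ k ∈ A.map (addRightEmbedding 2), Nat.fib k := by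
  simp [fibF_eq_fib]

lemma sum_zeckSupport (N : ℕ) : ∑ i ∈ zeckSupport N, fibF i = N := by
  have hnodup : N.zeckendorf.Nodup :=
    (isZeckendorfRep_iff_pairwise.1 N.isZeckendorfRep_zeckendorf).2.imp (by omega)
  rw [sum_fibF_eq_sum_map_fib, map_zeckSupport, List.sum_toFinset _ hnodup,
    Nat.sum_zeckendorf_fib]

lemma IsSparse.zeckSupport_sum {A : Finset ℕ} (hA : IsSparse A) :
    zeckSupport (∑ i ∈ A, fibF i) = A := by
  have hsum : (∑ i ∈ A, fibF i).zeckendorf = (A.map (addRightEmbedding 2)).sort (· ≥ ·) := by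
    conv_rhs => rw [← Nat.zeckendorf_sum_fib hA.isZeckendorfRep_sort]
    rw [sum_fibF_eq_sum_map_fib, ← List.sum_toFinset _ (sort_nodup _ _), sort_toFinset]
  ext i
  simp [mem_zeckSupport_iff_mem_zeckendorf, hsum]

lemma zeckSupport_injective : Function.Injective zeckSupport :=
  Function.LeftInverse.injective (g := fun A ↦ ∑ i ∈ A, fibF i) sum_zeckSupport

@[simp]
lemma zeckSupport_zero : zeckSupport 0 = ∅ := by
  simpa using IsSparse.zeckSupport_sum (A := ∅) (by simp [IsSparse])

end Zeckendorf

section Alternating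

/-- The support of the digit pattern `…1010` (leading digit at position `n - 1`), whose value
`F n - 1` is the largest below `F n`. -/
def alternating (n : ℕ) : Finset ℕ := {i ∈ range n | Odd (i + n)}

lemma mem_alternating {n i : ℕ} : i ∈ alternating n ↔ i < n ∧ Odd (i + n) := by
  simp [alternating]

lemma alternating_one : alternating 1 = {0} := rfl

lemma alternating_add_two (n : ℕ) : alternating (n + 2) = insert (n + 1) (alternating n) := by
  ext i
  simp only [mem_insert, mem_alternating, Nat.odd_iff]
  omega

lemma add_one_notMem_alternating (n : ℕ) : n + 1 ∉ alternating n := by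
  simp [mem_alternating]

lemma sum_alternating_add_one : ∀ n, ∑ i ∈ alternating n, fibF i + 1 = fibF n
  | 0 => rfl
  | 1 => rfl
  | n + 2 => by
    rw [alternating_add_two, sum_insert (add_one_notMem_alternating n), add_assoc,
      sum_alternating_add_one n, fibF]

variable {n M N : ℕ}

lemma disjoint_zeckSupport_alternating (hM : ∀ i ∈ zeckSupport M, n < i) :
    Disjoint (zeckSupport M) (alternating n) :=
  disjoint_left.2 fun i hi hi' ↦ ((mem_alternating.1 hi').1.trans (hM i hi)).false

lemma isSparse_union_alternating {A : Finset ℕ} (hA : IsSparse A) (hlt : ∀ i ∈ A, n < i) :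
    IsSparse (A ∪ alternating n) := by
  intro i hi hi'
  simp only [mem_union, mem_alternating, Nat.odd_iff] at hi hi'
  have := hA i
  have := hlt i
  have := hlt (i + 1)
  grind

lemma zeckSupport_eq_union_alternating (hM : ∀ i ∈ zeckSupport M, n < i)
    (hN : M + fibF n = N + 1) : zeckSupport N = zeckSupport M ∪ alternating n := by
  rw [← (isSparse_union_alternating (isSparse_zeckSupport M) hM).zeckSupport_sum,
    sum_union (disjoint_zeckSupport_alternating hM), sum_zeckSupport]
  congr 1
  have := sum_alternating_add_one n
  omega

/-- The Zeckendorf digits of `N` at the positions `n, n - 1, n - 2, …, 0` are `0, 1, 0, …`,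
alternating. The positive `n` with this property are the levels at which the adding machine, started
from `N`, may be interrupted, after having erased the digits below position `n`. -/
def EndsAlternating (n N : ℕ) : Prop := ∀ i ≤ n, i ∈ zeckSupport N ↔ i ∈ alternating n

lemma EndsAlternating.exists_add_fibF_eq (h : EndsAlternating n N) :
    ∃ M, (∀ i ∈ zeckSupport M, n < i) ∧ M + fibF n = N + 1 := by
  set A := {i ∈ zeckSupport N | n < i}
  have hsupp : zeckSupport (∑ i ∈ A, fibF i) = A :=
    ((isSparse_zeckSupport N).mono (filter_subset _ _)).zeckSupport_sum
  have hlt : ∀ i ∈ zeckSupport (∑ i ∈ A, fibF i), n < i := by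
    rw [hsupp]
    exact fun i hi ↦ (mem_filter.1 hi).2
  have hunion : zeckSupport N = A ∪ alternating n := by
    ext i
    have := h i
    have : i ∈ alternating n → i < n := fun hi ↦ (mem_alternating.1 hi).1
    grind
  refine ⟨_, hlt, ?_⟩
  rw [← sum_zeckSupport N, hunion, sum_union (hsupp ▸ disjoint_zeckSupport_alternating hlt),
    add_assoc, sum_alternating_add_one]

lemma endsAlternating_iff_forall_lt (h : M + fibF n = N + 1) :
    EndsAlternating n N ↔ ∀ i ∈ zeckSupport M, n < i := by
  constructor
  · intro hN
    obtain ⟨M', hM', h'⟩ := hN.exists_add_fibF_eq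
    obtain rfl : M' = M := by omega
    exact hM'
  · intro hM i hi
    have : i ∉ zeckSupport M := fun hiM ↦ (hM i hiM).not_ge hi
    simp [zeckSupport_eq_union_alternating hM h, this]

lemma endsAlternating_zero_iff : EndsAlternating 0 N ↔ zeck N 0 = 0 := by
  simp [EndsAlternating, mem_alternating, zeck_eq_ite]

lemma endsAlternating_one_iff : EndsAlternating 1 N ↔ zeck N 0 ≠ 0 := by
  have := isSparse_zeckSupport N 0
  simp only [EndsAlternating, mem_alternating, zeck_eq_ite]
  constructor
  · intro h
    have := h 0
    grind
  · intro h i hi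
    interval_cases i <;> simp_all

lemma endsAlternating_add_two_iff :
    EndsAlternating (n + 2) N ↔ EndsAlternating n N ∧ zeck N (n + 1) = 1 ∧ zeck N n = 0 := by
  have := isSparse_zeckSupport N (n + 1)
  simp only [EndsAlternating, alternating_add_two, zeck_eq_ite, mem_insert, mem_alternating]
  constructor
  · grind
  · rintro ⟨h, _, _⟩ i hi
    have := h i
    grind

lemma endsAlternating_two_mul_iff (k : ℕ) :
    EndsAlternating (2 * k) N ↔
      zeck N 0 = 0 ∧ ∀ i < k, zeck N (2 * i + 1) = 1 ∧ zeck N (2 * i) = 0 := by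
  induction k with
  | zero => simp [endsAlternating_zero_iff]
  | succ k ih =>
    rw [mul_add_one, endsAlternating_add_two_iff, ih, Nat.forall_lt_succ_right, and_assoc]

lemma endsAlternating_two_mul_add_one_iff (k : ℕ) :
    EndsAlternating (2 * k + 1) N ↔
      zeck N 0 ≠ 0 ∧ ∀ i < k, zeck N (2 * i + 2) = 1 ∧ zeck N (2 * i + 1) = 0 := by
  induction k with
  | zero => simp [endsAlternating_one_iff]
  | succ k ih =>
    rw [mul_add_one, add_right_comm, endsAlternating_add_two_iff, ih, Nat.forall_lt_succ_right,
      and_assoc]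

end Alternating

section CarryLevel

/-- The largest `n` with `EndsAlternating n N`. Equivalently, the position of the lowest digit `1`
of `N + 1`. -/
def carryLevel (N : ℕ) : ℕ := if zeck N 0 = 0 then 2 * carryLen N else 2 * carryLen N + 1

variable {n N : ℕ}

lemma endsAlternating_iff : EndsAlternating n N ↔ n ≤ carryLevel N ∧ (Even n ↔ zeck N 0 = 0) := by
  obtain ⟨k, rfl | rfl⟩ := n.even_or_odd'
  · rw [endsAlternating_two_mul_iff, carryLevel, carryLen]
    split_ifs with h0 <;> simp [h0, Nat.le_find_iff]
  · rw [endsAlternating_two_mul_add_one_iff, carryLevel, carryLen]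
    split_ifs with h0 <;> simp [h0, Nat.le_find_iff]

lemma even_carryLevel_iff : Even (carryLevel N) ↔ zeck N 0 = 0 := by
  unfold carryLevel
  split_ifs with h0 <;> simp [h0]

lemma endsAlternating_carryLevel (N : ℕ) : EndsAlternating (carryLevel N) N :=
  endsAlternating_iff.2 ⟨le_rfl, even_carryLevel_iff⟩

lemma exists_zeckSupport_add_one_eq_insert (N : ℕ) :
    ∃ M, (∀ i ∈ zeckSupport M, carryLevel N < i) ∧ M + fibF (carryLevel N) = N + 1 ∧
      zeckSupport (N + 1) = insert (carryLevel N) (zeckSupport M) := by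
  obtain ⟨M, hlt, hN⟩ := (endsAlternating_carryLevel N).exists_add_fibF_eq
  refine ⟨M, hlt, hN, ?_⟩
  have hmax : ¬ EndsAlternating (carryLevel N + 2) N := fun h ↦ by
    have := (endsAlternating_iff.1 h).1
    omega
  set r := carryLevel N
  have hnext : r + 1 ∉ zeckSupport M := fun hmem ↦ hmax <| by
    rw [endsAlternating_add_two_iff, zeck_eq_ite, zeck_eq_ite]
    have hr : r ∉ zeckSupport N := fun hmem ↦
      (mem_alternating.1 ((endsAlternating_carryLevel N r le_rfl).1 hmem)).1.false
    have hmem' : r + 1 ∈ zeckSupport N := by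
      rw [zeckSupport_eq_union_alternating hlt hN]
      exact mem_union_left _ hmem
    exact ⟨endsAlternating_carryLevel N, if_pos hmem', if_neg hr⟩
  have hr : r ∉ zeckSupport M := fun hmem ↦ (hlt r hmem).false
  have hsparse : IsSparse (insert r (zeckSupport M)) := by
    intro i hi hi'
    have := isSparse_zeckSupport M i
    have := hlt (i + 1)
    grind
  rw [← hsparse.zeckSupport_sum, sum_insert hr, sum_zeckSupport, ← hN, add_comm]

end CarryLevel

section TransitionMatrix

/-- The positive levels `n` at which the adding machine may be interrupted when started from `N`. -/
def resetLevels (N : ℕ) : Finset ℕ := {n ∈ Icc 1 (carryLevel N) | Even n ↔ zeck N 0 = 0}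

lemma mem_resetLevels {N n : ℕ} : n ∈ resetLevels N ↔ 0 < n ∧ EndsAlternating n N := by
  rw [endsAlternating_iff, resetLevels, mem_filter, mem_Icc, Nat.one_le_iff_ne_zero,
    Nat.pos_iff_ne_zero, and_assoc]

lemma fibF_le_of_mem_resetLevels {N n : ℕ} (hn : n ∈ resetLevels N) : fibF n ≤ N + 1 := by
  obtain ⟨M, -, hM⟩ := (mem_resetLevels.1 hn).2.exists_add_fibF_eq
  omega

variable (p : ℕ → ℝ)

/-- The part of `Smat p N M` that comes from the interrupted additions: at level `n` the carry
propagates through the first `(n + 1) / 2` steps and fails at the next one. -/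
noncomputable def resetProb (N M : ℕ) : ℝ :=
  ∑ n ∈ resetLevels N,
    if M = N + 1 - fibF n then Pprod p ((n + 1) / 2) * (1 - p ((n + 1) / 2 + 1)) else 0

lemma resetProb_of_zeck_eq_zero {N : ℕ} (h0 : zeck N 0 = 0) (M : ℕ) :
    resetProb p N M = ∑ m ∈ Icc 1 (carryLen N),
      if M = N + 1 - fibF (2 * m) then Pprod p m * (1 - p (m + 1)) else 0 := by
  refine sum_nbij' (fun n ↦ (n + 1) / 2) (fun m ↦ 2 * m) ?_ ?_ ?_ ?_ ?_
  all_goals simp only [resetLevels, carryLevel, h0, if_true, iff_true, mem_filter, mem_Icc,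
    Nat.even_iff]
  iterate 4 omega
  rintro n ⟨-, heven⟩
  have hn : 2 * ((n + 1) / 2) = n := by omega
  rw [hn]

lemma resetProb_of_zeck_ne_zero {N : ℕ} (h0 : zeck N 0 ≠ 0) (M : ℕ) :
    resetProb p N M = ∑ m ∈ Icc 1 (carryLen N + 1),
      if M = N + 1 - fibF (2 * m - 1) then Pprod p m * (1 - p (m + 1)) else 0 := by
  refine sum_nbij' (fun n ↦ (n + 1) / 2) (fun m ↦ 2 * m - 1) ?_ ?_ ?_ ?_ ?_
  all_goals simp only [resetLevels, carryLevel, h0, if_false, iff_false, mem_filter, mem_Icc,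
    Nat.even_iff]
  iterate 4 omega
  rintro n ⟨-, hodd⟩
  have hn : 2 * ((n + 1) / 2) - 1 = n := by omega
  rw [hn]

lemma Smat_eq_add_resetProb (N M : ℕ) :
    Smat p N M = (if M = N then 1 - p 1 else 0) +
      (if M = N + 1 then Pprod p ((carryLevel N + 1) / 2 + 1) else 0) + resetProb p N M := by
  rw [Smat, add_assoc]
  congr 1
  by_cases h0 : zeck N 0 = 0
  · have hlevel : (carryLevel N + 1) / 2 = carryLen N := by
      rw [carryLevel, if_pos h0]
      omega
    rw [if_pos h0, hlevel, resetProb_of_zeck_eq_zero p h0]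
  · have hlevel : (carryLevel N + 1) / 2 = carryLen N + 1 := by
      rw [carryLevel, if_neg h0]
      omega
    rw [if_neg h0, hlevel, resetProb_of_zeck_ne_zero p h0]

lemma resetProb_eq_zero {N M : ℕ} (h : ∀ n, M + fibF n ≠ N + 1) : resetProb p N M = 0 := by
  refine sum_eq_zero fun n hn ↦ if_neg fun hM ↦ h n ?_
  have := fibF_le_of_mem_resetLevels hn
  omega

lemma resetProb_of_add_fibF_eq {N M n : ℕ} (h : M + fibF n = N + 1) :
    resetProb p N M = if n ∈ resetLevels N then
      Pprod p ((n + 1) / 2) * (1 - p ((n + 1) / 2 + 1)) else 0 := by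
  have hlevel : ∀ k ∈ resetLevels N, M = N + 1 - fibF k ↔ n = k := fun k hk ↦ by
    have := fibF_le_of_mem_resetLevels hk
    rw [← fibF_injective.eq_iff (a := n)]
    omega
  rw [resetProb, sum_congr rfl fun k hk ↦ if_congr (hlevel k hk) rfl rfl, sum_ite_eq]

end TransitionMatrix

section Weights

variable (p : ℕ → ℝ)

lemma Pprod_succ (t : ℕ) : Pprod p (t + 1) = Pprod p t * p (t + 1) :=
  prod_Icc_succ_top (Nat.le_add_left 1 t) p

lemma xiF_of_ne_zero {n : ℕ} (hn : n ≠ 0) : xiF p n = p ((n + 1) / 2 + 1) := if_neg hn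

/-- Let `N = M + F n - 1`, where the Zeckendorf digits of `M` at the positions up to `n` vanish. If
`n ≠ 0`, then `ξ M * carryWeight p n` is the stationary flow `ξ N * (p 1 ⋯ p ⌊(n + 1) / 2⌋)` of the
carries out of `N` that get as far as level `n`. -/
noncomputable def carryWeight (n : ℕ) : ℝ := p 1 * ∏ i ∈ range n, xiF p i

lemma carryWeight_succ (n : ℕ) : carryWeight p (n + 1) = carryWeight p n * xiF p n := by
  rw [carryWeight, prod_range_succ, ← mul_assoc, carryWeight]

@[simp]
lemma carryWeight_zero : carryWeight p 0 = p 1 := by simp [carryWeight]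

lemma carryWeight_one : carryWeight p 1 = p 1 := by simp [carryWeight, xiF]

lemma prod_alternating_mul_Pprod_succ : ∀ n,
    (∏ i ∈ alternating n, xiF p i) * Pprod p ((n + 1) / 2 + 1) = carryWeight p (n + 1)
  | 0 => by simp [alternating, Pprod, carryWeight_one]
  | 1 => by simp [alternating_one, Pprod, carryWeight, xiF, prod_range_succ, prod_Icc_succ_top]
  | n + 2 => by
    have hlevel : (n + 2 + 1) / 2 = (n + 1) / 2 + 1 := by omega
    rw [alternating_add_two, prod_insert (add_one_notMem_alternating n), hlevel, Pprod_succ,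
      carryWeight_succ, carryWeight_succ, ← prod_alternating_mul_Pprod_succ n,
      xiF_of_ne_zero p (Nat.succ_ne_zero (n + 1)), hlevel]
    ring

lemma prod_alternating_mul_Pprod : ∀ {n}, n ≠ 0 →
    (∏ i ∈ alternating n, xiF p i) * Pprod p ((n + 1) / 2) = carryWeight p n
  | 1, _ => by simp [alternating_one, Pprod, carryWeight_one, xiF]
  | n + 2, _ => by
    rw [alternating_add_two, prod_insert (add_one_notMem_alternating n), mul_assoc,
      carryWeight_succ, ← prod_alternating_mul_Pprod_succ, mul_comm]
    congr 3
    omega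

lemma xi_eq_prod_zeckSupport (N : ℕ) : xi p N = ∏ i ∈ zeckSupport N, xiF p i := by
  rw [xi, zeckSupport, prod_filter]
  refine prod_congr rfl fun i _ ↦ ?_
  rw [zeck_eq_ite]
  by_cases hi : i ∈ zeckSupport N <;> simp [hi]

lemma xi_eq_mul_prod_alternating {n M N : ℕ} (hM : ∀ i ∈ zeckSupport M, n < i)
    (hN : M + fibF n = N + 1) : xi p N = xi p M * ∏ i ∈ alternating n, xiF p i := by
  rw [xi_eq_prod_zeckSupport, zeckSupport_eq_union_alternating hM hN,
    prod_union (disjoint_zeckSupport_alternating hM), ← xi_eq_prod_zeckSupport]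

lemma xi_mul_resetProb {n M N : ℕ} (hN : M + fibF n = N + 1) :
    xi p N * resetProb p N M = if ∀ i ∈ zeckSupport M, n < i then
      xi p M * (carryWeight p n - carryWeight p (n + 1)) else 0 := by
  simp only [resetProb_of_add_fibF_eq p hN, mem_resetLevels, endsAlternating_iff_forall_lt hN]
  rcases eq_or_ne n 0 with rfl | hn
  · simp [carryWeight_one]
  simp only [Nat.pos_of_ne_zero hn, true_and]
  split_ifs with hM
  · rw [xi_eq_mul_prod_alternating p hM hN, carryWeight_succ, ← prod_alternating_mul_Pprod p hn,
      xiF_of_ne_zero p hn]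
    ring
  · exact mul_zero _

lemma xi_mul_Pprod_carryLevel (N : ℕ) :
    xi p N * Pprod p ((carryLevel N + 1) / 2 + 1) =
      xi p (N + 1) * carryWeight p (carryLevel N) := by
  obtain ⟨M, hlt, hN, hinsert⟩ := exists_zeckSupport_add_one_eq_insert N
  have hnotMem : carryLevel N ∉ zeckSupport M := fun h ↦ (hlt _ h).false
  rw [xi_eq_mul_prod_alternating p hlt hN, mul_assoc, prod_alternating_mul_Pprod_succ,
    carryWeight_succ, xi_eq_prod_zeckSupport p (N + 1), hinsert, prod_insert hnotMem,
    ← xi_eq_prod_zeckSupport]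
  ring

end Weights

section Summability

lemma hasSum_sub_succ {G : Type*} [AddCommGroup G] [TopologicalSpace G] [IsTopologicalAddGroup G]
    {f : ℕ → G} (hf : Summable f) : HasSum (fun n ↦ f n - f (n + 1)) (f 0) := by
  simpa using hf.hasSum.sub ((hasSum_nat_add_iff' 1).2 hf.hasSum)

lemma hasSum_mul_ite_eq {α R : Type*} [DecidableEq α] [NonUnitalNonAssocSemiring R]
    [TopologicalSpace R] (f g : α → R) (a : α) :
    HasSum (fun b ↦ f b * if a = b then g b else 0) (f a * g a) := by
  convert hasSum_single a fun b hb ↦ ?_ using 1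
  · simp
  · simp [hb.symm]

lemma summable_of_summable_mul_of_one_le {α : Type*} {f g : α → ℝ} (hf : ∀ a, 0 ≤ f a)
    (hg : ∀ a, 1 ≤ g a) (h : Summable fun a ↦ f a * g a) : Summable f :=
  h.of_nonneg_of_le hf fun a ↦ le_mul_of_one_le_right (hf a) (hg a)

variable {p : ℕ → ℝ}

lemma summable_xiF (hp : Summable p) : Summable (xiF p) := by
  rw [← summable_nat_add_iff 1]
  have hshift : Summable fun k ↦ p (k + 2) := (summable_nat_add_iff 2).2 hp
  refine Summable.even_add_odd ?_ ?_
  · refine hshift.congr fun k ↦ ?_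
    rw [xiF_of_ne_zero p (by omega)]
    congr 1; omega
  · refine hshift.congr fun k ↦ ?_
    rw [xiF_of_ne_zero p (by omega)]
    congr 1; omega

lemma summable_finsetProd_xiF (hp : Summable p) :
    Summable fun A : Finset ℕ ↦ ∏ i ∈ A, xiF p i :=
  summable_finsetProd_of_summable_norm (summable_xiF hp).norm

lemma summable_xi (hp : Summable p) : Summable (xi p) :=
  ((summable_finsetProd_xiF hp).comp_injective zeckSupport_injective).congr fun N ↦
    (xi_eq_prod_zeckSupport p N).symm

lemma summable_carryWeight (hp : Summable p) : Summable (carryWeight p) :=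
  have range_injective : Function.Injective range := Function.LeftInverse.injective card_range
  ((summable_finsetProd_xiF hp).comp_injective range_injective).mul_left (p 1)

lemma hasSum_xi_mul_resetProb {M : ℕ} {a : ℝ}
    (h : HasSum (fun n ↦ if ∀ i ∈ zeckSupport M, n < i then
      xi p M * (carryWeight p n - carryWeight p (n + 1)) else 0) a) :
    HasSum (fun N ↦ xi p N * resetProb p N M) a := by
  have hadd (n : ℕ) : M + fibF n = M + fibF n - 1 + 1 := by
    have := fibF_pos n
    omega
  have hinj : Function.Injective fun n ↦ M + fibF n - 1 := fun m n hmn ↦ by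
    have := hadd m
    have := hadd n
    exact fibF_injective (by simp only at hmn; omega)
  rw [← hinj.hasSum_iff]
  · exact h.congr_fun fun n ↦ xi_mul_resetProb p (hadd n)
  · intro N hN
    rw [resetProb_eq_zero p fun n hn ↦ hN ⟨n, by simp [hn]⟩, mul_zero]

lemma hasSum_xi_mul_resetProb_zero (hp : Summable p) :
    HasSum (fun N ↦ xi p N * resetProb p N 0) (xi p 0 * p 1) := by
  refine hasSum_xi_mul_resetProb ?_
  simpa using (hasSum_sub_succ (summable_carryWeight hp)).mul_left (xi p 0)

lemma forall_mem_zeckSupport_add_one_lt_iff {k n : ℕ} :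
    (∀ i ∈ zeckSupport (k + 1), n < i) ↔ n < carryLevel k := by
  obtain ⟨M, hlt, -, hinsert⟩ := exists_zeckSupport_add_one_eq_insert k
  rw [hinsert, forall_mem_insert]
  exact ⟨And.left, fun hn ↦ ⟨hn, fun i hi ↦ hn.trans (hlt i hi)⟩⟩

lemma hasSum_xi_mul_resetProb_add_one (p : ℕ → ℝ) (k : ℕ) :
    HasSum (fun N ↦ xi p N * resetProb p N (k + 1))
      (xi p (k + 1) * (p 1 - carryWeight p (carryLevel k))) := by
  refine hasSum_xi_mul_resetProb ?_
  have htelescope : ∑ n ∈ range (carryLevel k),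
      xi p (k + 1) * (carryWeight p n - carryWeight p (n + 1)) =
        xi p (k + 1) * (p 1 - carryWeight p (carryLevel k)) := by
    rw [← mul_sum, sum_range_sub', carryWeight_zero]
  simp only [← htelescope, forall_mem_zeckSupport_add_one_lt_iff]
  rw [sum_congr rfl fun n hn ↦ (if_pos (mem_range.1 hn)).symm]
  exact hasSum_sum_of_ne_finset_zero fun n hn ↦ if_neg (mt mem_range.2 hn)

end Summability

theorem stmt7_general {p : ℕ → ℝ} (hp : Summable p) :
    Summable (xi p) ∧ ∀ j, HasSum (fun i ↦ xi p i * Smat p i j) (xi p j) := by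
  refine ⟨summable_xi hp, fun j ↦ ?_⟩
  have hstay : HasSum (fun i ↦ xi p i * if j = i then 1 - p 1 else 0) (xi p j * (1 - p 1)) :=
    hasSum_mul_ite_eq (xi p) (fun _ ↦ 1 - p 1) j
  simp only [Smat_eq_add_resetProb, mul_add]
  cases j with
  | zero =>
    convert (hstay.add hasSum_zero).add (hasSum_xi_mul_resetProb_zero hp) using 1
    · simp
    · ring
  | succ k =>
    have hcarry : HasSum
        (fun i ↦ xi p i * if k + 1 = i + 1 then Pprod p ((carryLevel i + 1) / 2 + 1) else 0)
        (xi p (k + 1) * carryWeight p (carryLevel k)) := by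
      simpa [xi_mul_Pprod_carryLevel] using
        hasSum_mul_ite_eq (xi p) (fun i ↦ Pprod p ((carryLevel i + 1) / 2 + 1)) k
    convert (hstay.add hcarry).add (hasSum_xi_mul_resetProb_add_one p k) using 1
    ring

/-- If `∑_{i ≥ 2} p i * F (2*(i-1)) < +∞`, then the nonnegative
sequence `μ` given by `μ 0 = 1` and `μ i = ξ i` for `i ≥ 1` (that is, `μ = xi p`) is
summable and satisfies `μ S = μ`; hence the chain admits an invariant probability
measure and is positive recurrent. -/
theorem stmt7 (p : ℕ → ℝ) (hp : ∀ i, 1 ≤ i → 0 < p i ∧ p i ≤ 1)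
    (hsum : Summable (fun i : ℕ => p (i+2) * (fibF (2*(i+1)) : ℝ))) :
    Summable (fun i : ℕ => xi p i) ∧
    ∀ j : ℕ, xi p j = ∑' i : ℕ, xi p i * Smat p i j := by
  have hp' : Summable p := (summable_nat_add_iff 2).1 <|
    summable_of_summable_mul_of_one_le (fun i ↦ (hp (i + 2) (by omega)).1.le)
      (fun i ↦ mod_cast fibF_pos (2 * (i + 1))) hsum
  obtain ⟨hsummable, hinvariant⟩ := stmt7_general hp'
  exact ⟨hsummable, fun j ↦ (hinvariant j).tsum_eq.symm⟩
end

section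
/- Let h(z) = a_2 z² + a_3 z³ + … + a_n zⁿ with n ≥ 2 and a_2, …, a_n ∈ ℂ, h not identically zero, and suppose liminf_{i→∞} p_i > 0. If p_3 < 1/2 and either p_2 = 1 or 0 < p_2 < 1 − p_3, then the set F_h is not connected. -/
/-- `rr p n = r_n = p (⌊(n+1)/2⌋ + 1)`. -/
noncomputable def rr (p : ℕ → ℝ) (n : ℕ) : ℝ := p ((n+1)/2 + 1)

/-- `qF p z n = q_{F_n}(z)`. -/
noncomputable def qF (p : ℕ → ℝ) (z : ℂ) : ℕ → ℂ
  | 0 => (z - (1 - (p 1 : ℂ))) / (p 1 : ℂ)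
  | 1 => (1 / (p 2 : ℂ)) * (qF p z 0) ^ 2 - (1 / (p 2 : ℂ) - 1)
  | (n+2) => (1 / (rr p (n+2) : ℂ)) * qF p z (n+1) * qF p z n - (1 / (rr p (n+2) : ℂ) - 1)

/-- The sequence `φ_n` associated to a polynomial `h`: `φ_0(z) = z`, `φ_1(z) = h(z)`,
`φ_n(z) = (1/r_n) φ_{n-1}(z) φ_{n-2}(z) - (1/r_n - 1)` for `n ≥ 2`. -/
noncomputable def phiSeq (p : ℕ → ℝ) (h : Polynomial ℂ) : ℕ → ℂ → ℂ
  | 0 => fun z => z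
  | 1 => fun z => h.eval z
  | (n+2) => fun z =>
      (1 / (rr p (n+2) : ℂ)) * phiSeq p h (n+1) z * phiSeq p h n z - (1 / (rr p (n+2) : ℂ) - 1)

/-- The fibered filled Julia set `F_h = {z : (φ_n(z))ₙ is bounded}`. -/
def Fset (p : ℕ → ℝ) (h : Polynomial ℂ) : Set ℂ :=
  {z : ℂ | ∃ C : ℝ, ∀ n : ℕ, ‖phiSeq p h n z‖ ≤ C}

/-!
For `R` large the sets `W n = {‖φ n‖ < R}` decrease to `F_h`: once `‖φ n‖ ≥ R`, the orbit grows
forever. Moreover every connected component of `W n` meets `F_h`: by the minimum modulus principle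
`φ n` has a zero in it, there `‖φ (n + 1)‖ < R` again, and compactness does the rest. Hence a
connected `F_h` would force every `W n` to be connected.

If `W n` is connected, all roots of `φ n` lie in one connected set, so `φ n` has a holomorphic
`N`-th root on `{‖φ n‖ > R}`, where `N = deg φ n`. It maps onto the exterior of a disc, so each
value of modulus `> R` has `N` distinct preimages and no critical point of `φ n` escapes. But `0` is
a critical point of every `φ n` with `n ≥ 1`, and the conditions on `p 2` and `p 3` make it escape.
-/

open Filter Polynomial Topology

section HolomorphicRoot

/-- The quotient `(z - b) / (z - a)` has a holomorphic logarithm on `U`. The equation is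
multiplied out, so that it makes sense at `z = a`. -/
def HasLogRatioOn (U : Set ℂ) (a b : ℂ) : Prop :=
  ∃ g : ℂ → ℂ, DifferentiableOn ℂ g U ∧ ∀ z ∈ U, Complex.exp (g z) * (z - a) = z - b

variable {U W : Set ℂ} {a b c : ℂ}

lemma HasLogRatioOn.symm : HasLogRatioOn U a b → HasLogRatioOn U b a := by
  rintro ⟨g, hg, hexp⟩
  refine ⟨fun z => -g z, hg.neg, fun z hz => ?_⟩
  rw [← hexp z hz, ← mul_assoc, ← Complex.exp_add, neg_add_cancel, Complex.exp_zero, one_mul]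

lemma HasLogRatioOn.trans : HasLogRatioOn U a b → HasLogRatioOn U b c → HasLogRatioOn U a c := by
  rintro ⟨f, hf, hfexp⟩ ⟨g, hg, hgexp⟩
  refine ⟨fun z => g z + f z, hg.add hf, fun z hz => ?_⟩
  rw [Complex.exp_add, mul_assoc, hfexp z hz, hgexp z hz]

lemma hasLogRatioOn_of_forall_dist_lt (h : ∀ z ∈ U, dist b a < dist z a) :
    HasLogRatioOn U a b := by
  have hne : ∀ z ∈ U, z - a ≠ 0 := fun z hz =>
    sub_ne_zero.2 (dist_pos.1 (dist_nonneg.trans_lt (h z hz)))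
  have hslit : ∀ z ∈ U, 1 + (a - b) / (z - a) ∈ Complex.slitPlane := by
    intro z hz
    apply Complex.mem_slitPlane_of_norm_lt_one
    rw [norm_div, div_lt_one (norm_pos_iff.2 (hne z hz)), ← dist_eq_norm, ← dist_eq_norm,
      dist_comm a b]
    exact h z hz
  refine ⟨fun z => Complex.log (1 + (a - b) / (z - a)), fun z hz => ?_, fun z hz => ?_⟩
  · have := hne z hz
    exact DifferentiableAt.differentiableWithinAt
      (DifferentiableAt.clog (by fun_prop (disch := assumption)) (hslit z hz))
  · have := hne z hz
    rw [Complex.exp_log (Complex.slitPlane_ne_zero (hslit z hz))]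
    field_simp
    ring

lemma hasLogRatioOn_of_isPreconnected (hW : IsOpen W) (hWc : IsPreconnected W)
    (hUW : Disjoint U W) (ha : a ∈ W) (hb : b ∈ W) : HasLogRatioOn U a b := by
  refine hWc.induction₂ (HasLogRatioOn U) (fun x hx => ?_) (fun _ _ _ _ _ _ => .trans)
    (fun _ _ _ _ => .symm) ha hb
  obtain ⟨ε, hε, hball⟩ := Metric.isOpen_iff.1 hW x hx
  filter_upwards [mem_nhdsWithin_of_mem_nhds (Metric.ball_mem_nhds x hε)] with y hy
  refine hasLogRatioOn_of_forall_dist_lt fun z hz => hy.trans_le (not_lt.1 fun hzx => ?_)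
  exact Set.disjoint_left.1 hUW hz (hball hzx)

lemma exists_prod_sub_eq_pow_mul_exp (s : Multiset ℂ) (hs : ∀ b ∈ s, HasLogRatioOn U a b) :
    ∃ g : ℂ → ℂ, DifferentiableOn ℂ g U ∧
      ∀ z ∈ U, (s.map fun b => z - b).prod = (z - a) ^ s.card * Complex.exp (g z) := by
  induction s using Multiset.induction_on with
  | empty => exact ⟨fun _ => 0, differentiableOn_const 0, by simp⟩
  | cons b s ih =>
    obtain ⟨g, hg, hprod⟩ := ih fun c hc => hs c (Multiset.mem_cons_of_mem hc)
    obtain ⟨k, hk, hexp⟩ := hs b (Multiset.mem_cons_self b s)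
    refine ⟨fun z => k z + g z, hk.add hg, fun z hz => ?_⟩
    rw [Multiset.map_cons, Multiset.prod_cons, hprod z hz, ← hexp z hz, Complex.exp_add,
      Multiset.card_cons]
    ring

lemma exists_differentiableOn_pow_natDegree_eq_eval {q : ℂ[X]} (hq : 0 < q.natDegree)
    (hU : ∀ a ∈ q.roots, ∀ b ∈ q.roots, HasLogRatioOn U a b) :
    ∃ ψ : ℂ → ℂ, DifferentiableOn ℂ ψ U ∧ ∀ z ∈ U, ψ z ^ q.natDegree = q.eval z := by
  have hsplit := IsAlgClosed.splits q
  have hcard : q.roots.card = q.natDegree := hsplit.natDegree_eq_card_roots.symm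
  obtain ⟨a, ha⟩ := Multiset.card_pos_iff_exists_mem.1 (hcard ▸ hq)
  obtain ⟨g, hg, hprod⟩ := exists_prod_sub_eq_pow_mul_exp q.roots (hU a ha)
  obtain ⟨l, hl⟩ := IsAlgClosed.exists_pow_nat_eq q.leadingCoeff hq
  refine ⟨fun z => l * (z - a) * Complex.exp (g z / q.natDegree), by fun_prop, fun z hz => ?_⟩
  have hdeg : (q.natDegree : ℂ) ≠ 0 := Nat.cast_ne_zero.2 hq.ne'
  rw [hsplit.eval_eq_prod_roots, hprod z hz, mul_pow, mul_pow, hl, ← Complex.exp_nat_mul,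
    mul_div_cancel₀ _ hdeg, hcard, mul_assoc]

end HolomorphicRoot

section ExteriorOfSublevel

variable {q : ℂ[X]} {R : ℝ} {N : ℕ} {ψ : ℂ → ℂ}

lemma isPreconnected_setOf_lt_norm_pow (hR : 0 < R) (hN : N ≠ 0) :
    IsPreconnected {w : ℂ | R < ‖w ^ N‖} := by
  have hN' : (0 : ℝ) < N := Nat.cast_pos.2 (Nat.pos_of_ne_zero hN)
  have hexp : ∀ z : ℂ, R < ‖Complex.exp z ^ N‖ ↔ Real.log R / N < z.re := fun z => by
    rw [← Complex.exp_nat_mul, Complex.norm_exp, ← Real.log_lt_iff_lt_exp hR,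
      ← nsmul_eq_mul, Complex.re_nsmul, nsmul_eq_mul, div_lt_iff₀' hN']
  have himage : {w : ℂ | R < ‖w ^ N‖} = Complex.exp '' {z | Real.log R / N < z.re} := by
    ext w
    constructor
    · intro (hw : R < ‖w ^ N‖)
      have hw0 : w ≠ 0 := by
        rintro rfl
        rw [zero_pow hN, norm_zero] at hw
        exact hR.not_gt hw
      exact ⟨Complex.log w, (hexp _).1 (by rwa [Complex.exp_log hw0]), Complex.exp_log hw0⟩
    · rintro ⟨z, hz, rfl⟩
      exact (hexp z).2 hz
  rw [himage]
  exact (convex_halfSpace_re_gt _).isPreconnected.image _ Complex.continuous_exp.continuousOn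

lemma isOpen_image_of_pow_eq_eval {U : Set ℂ} (hU : IsOpen U) (hq : 0 < q.natDegree)
    (hψ : DifferentiableOn ℂ ψ U) (hpow : ∀ z ∈ U, ψ z ^ N = q.eval z) : IsOpen (ψ '' U) := by
  rw [isOpen_iff_mem_nhds]
  rintro _ ⟨z, hz, rfl⟩
  rcases (hψ.analyticAt (hU.mem_nhds hz)).eventually_constant_or_nhds_le_map_nhds with hcst | hmap
  · have heval : ∀ᶠ y in 𝓝 z, q.eval y = (C (q.eval z)).eval y := by
      filter_upwards [hcst, hU.mem_nhds hz] with y hy hyU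
      rw [eval_C, ← hpow y hyU, ← hpow z hz, hy]
    have hqC : q = C (q.eval z) := eq_of_infinite_eval_eq _ _ (infinite_of_mem_nhds z heval)
    exact absurd (hqC ▸ natDegree_C _) hq.ne'
  · exact hmap (image_mem_map (hU.mem_nhds hz))

lemma isCompact_setOf_norm_eval_le (hq : 0 < q.natDegree) (R : ℝ) :
    IsCompact {z | ‖q.eval z‖ ≤ R} := by
  have hproper := q.isProperMap_eval (natDegree_pos_iff_degree_pos.1 hq)
  simpa [Set.preimage] using hproper.isCompact_preimage (isCompact_closedBall 0 R)

lemma closure_image_inter_subset_of_pow_eq_eval (hq : 0 < q.natDegree)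
    (hψ : ContinuousOn ψ {z | R < ‖q.eval z‖})
    (hpow : ∀ z, R < ‖q.eval z‖ → ψ z ^ N = q.eval z) :
    closure (ψ '' {z | R < ‖q.eval z‖}) ∩ {w | R < ‖w ^ N‖} ⊆ ψ '' {z | R < ‖q.eval z‖} := by
  rintro v ⟨hv, hvR : R < ‖v ^ N‖⟩
  obtain ⟨s, hRs, hsv⟩ := exists_between hvR
  obtain ⟨t, hvt⟩ := exists_gt ‖v ^ N‖
  let K : Set ℂ := {z | s ≤ ‖q.eval z‖ ∧ ‖q.eval z‖ ≤ t}
  have hK : IsCompact K :=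
    (isCompact_setOf_norm_eval_le hq t).inter_left (isClosed_le continuous_const q.continuous.norm)
  have hKU : K ⊆ {z | R < ‖q.eval z‖} := fun z hz => hRs.trans_le hz.1
  have hO : IsOpen {w : ℂ | s < ‖w ^ N‖ ∧ ‖w ^ N‖ < t} :=
    (isOpen_lt continuous_const (continuous_pow N).norm).inter
      (isOpen_lt (continuous_pow N).norm continuous_const)
  have hsub : {w | s < ‖w ^ N‖ ∧ ‖w ^ N‖ < t} ∩ ψ '' {z | R < ‖q.eval z‖} ⊆ ψ '' K := by
    rintro _ ⟨⟨hs, ht⟩, z, hz, rfl⟩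
    rw [hpow z hz] at hs ht
    exact ⟨z, ⟨hs.le, ht.le⟩, rfl⟩
  have hclosed : IsClosed (ψ '' K) := (hK.image_of_continuousOn (hψ.mono hKU)).isClosed
  exact Set.image_mono hKU (hclosed.closure_subset_iff.2 hsub (hO.inter_closure ⟨⟨hsv, hvt⟩, hv⟩))

lemma surjOn_of_pow_eq_eval (hq : 0 < q.natDegree) (hR : 0 < R) (hN : N ≠ 0)
    (hψ : DifferentiableOn ℂ ψ {z | R < ‖q.eval z‖})
    (hpow : ∀ z, R < ‖q.eval z‖ → ψ z ^ N = q.eval z) :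
    Set.SurjOn ψ {z | R < ‖q.eval z‖} {w | R < ‖w ^ N‖} := by
  have hopen := isOpen_image_of_pow_eq_eval (isOpen_lt continuous_const q.continuous.norm) hq hψ
    hpow
  obtain ⟨z, hz⟩ : ∃ z, R < ‖q.eval z‖ :=
    ((q.tendsto_norm_atTop (natDegree_pos_iff_degree_pos.1 hq)
      tendsto_norm_cobounded_atTop).eventually_gt_atTop R).exists
  refine (isPreconnected_setOf_lt_norm_pow hR hN).subset_of_closure_inter_subset hopen
    ⟨ψ z, ?_, z, hz, rfl⟩ (closure_image_inter_subset_of_pow_eq_eval hq hψ.continuousOn hpow)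
  rwa [Set.mem_ofPred_eq, hpow z hz]

end ExteriorOfSublevel

section CriticalPoints

lemma eval_derivative_ne_zero_of_natDegree_le_card_roots {K : Type*} [CommRing K] [IsDomain K]
    [DecidableEq K] {P : K[X]} (hP : P ≠ 0) (hcard : P.natDegree ≤ P.roots.toFinset.card) {z : K}
    (hz : P.IsRoot z) : P.derivative.eval z ≠ 0 := by
  intro hder
  have hnodup : P.roots.Nodup := Multiset.toFinset_card_eq_card_iff_nodup.1
    ((Multiset.toFinset_card_le _).antisymm (P.card_roots'.trans hcard))
  have hcount := Multiset.nodup_iff_count_le_one.1 hnodup z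
  rw [count_roots] at hcount
  exact hcount.not_gt ((one_lt_rootMultiplicity_iff_isRoot hP).2 ⟨hz, hder⟩)

lemma card_toFinset_nthRoots {N : ℕ} (hN : N ≠ 0) {w : ℂ} (hw : w ≠ 0) :
    (nthRoots N w).toFinset.card = N := by
  have hζ := Complex.isPrimitiveRoot_exp N hN
  rw [Multiset.toFinset_card_of_nodup (hζ.nthRoots_nodup hw), hζ.card_nthRoots,
    if_pos (IsAlgClosed.exists_pow_nat_eq w (Nat.pos_of_ne_zero hN))]

lemma eval_derivative_ne_zero_of_isPreconnected_sublevel {q : ℂ[X]} (hq : 0 < q.natDegree) {R : ℝ}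
    (hR : 0 < R) (hconn : IsPreconnected {z | ‖q.eval z‖ < R}) {c : ℂ} (hc : R < ‖q.eval c‖) :
    q.derivative.eval c ≠ 0 := by
  have hroots : ∀ a ∈ q.roots, a ∈ {z | ‖q.eval z‖ < R} := fun a ha => by
    rwa [Set.mem_ofPred_eq, isRoot_of_mem_roots ha, norm_zero]
  have hdisj : Disjoint {z | R < ‖q.eval z‖} {z | ‖q.eval z‖ < R} :=
    Set.disjoint_left.2 fun z (hz : R < _) => hz.not_gt
  obtain ⟨ψ, hψ, hpow⟩ := exists_differentiableOn_pow_natDegree_eq_eval hq fun a ha b hb =>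
    hasLogRatioOn_of_isPreconnected (isOpen_lt q.continuous.norm continuous_const) hconn hdisj
      (hroots a ha) (hroots b hb)
  have hdeg : (q - C (q.eval c)).natDegree = q.natDegree := natDegree_sub_C
  have hne : q - C (q.eval c) ≠ 0 := fun h => by simp [← hdeg, h] at hq
  have hsurj : Set.SurjOn ψ (q - C (q.eval c)).roots.toFinset
      (nthRoots q.natDegree (q.eval c)).toFinset := by
    intro w hw
    have hwq : w ^ q.natDegree = q.eval c := by simpa [mem_nthRoots hq] using hw
    obtain ⟨z, hz, rfl⟩ := surjOn_of_pow_eq_eval hq hR hq.ne' hψ hpow (hwq ▸ hc : R < ‖w ^ _‖)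
    refine ⟨z, ?_, rfl⟩
    rw [Finset.mem_coe, Multiset.mem_toFinset, mem_roots hne]
    simp [← hwq, hpow z hz]
  have hcard := Finset.card_le_card_of_surjOn ψ hsurj
  rw [card_toFinset_nthRoots hq.ne' (norm_pos_iff.1 (hR.trans hc)), ← hdeg] at hcard
  simpa using eval_derivative_ne_zero_of_natDegree_le_card_roots hne hcard (z := c) (by simp)

end CriticalPoints

section Sublevels

lemma isPreconnected_of_forall_inter_nonempty {X : Type*} [TopologicalSpace X] {K W : Set X}
    (hK : IsPreconnected K) (hKW : K ⊆ W) (hW : IsOpen W)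
    (hmeet : ∀ V ⊆ W, V.Nonempty → Disjoint W (frontier V) → (V ∩ K).Nonempty) :
    IsPreconnected W := by
  have hempty : ∀ u v : Set X, IsOpen u → IsOpen v → W ⊆ u ∪ v → W ∩ (u ∩ v) = ∅ → K ⊆ u →
      W ⊆ u := by
    intro u v hu hv hWuv huv hKu x hxW
    by_contra hxu
    have hfr : Disjoint W (frontier (W ∩ v)) := by
      refine Set.disjoint_left.2 fun y hyW hy => ?_
      rw [(hW.inter hv).frontier_eq] at hy
      have hyu : y ∈ u := (hWuv hyW).resolve_right fun hyv => hy.2 ⟨hyW, hyv⟩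
      obtain ⟨z, hzu, hzW, hzv⟩ := mem_closure_iff.1 hy.1 u hu hyu
      exact Set.eq_empty_iff_forall_notMem.1 huv z ⟨hzW, hzu, hzv⟩
    obtain ⟨y, ⟨hyW, hyv⟩, hyK⟩ := hmeet (W ∩ v) Set.inter_subset_left
      ⟨x, hxW, (hWuv hxW).resolve_left hxu⟩ hfr
    exact Set.eq_empty_iff_forall_notMem.1 huv y ⟨hyW, hKu hyK, hyv⟩
  rw [isPreconnected_iff_subset_of_disjoint] at hK ⊢
  intro u v hu hv hWuv huv
  have hKuv : K ∩ (u ∩ v) = ∅ :=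
    Set.subset_eq_empty (Set.inter_subset_inter_left _ hKW) huv
  refine (hK u v hu hv (hKW.trans hWuv) hKuv).imp (hempty u v hu hv hWuv huv) ?_
  exact hempty v u hv hu (Set.union_comm u v ▸ hWuv) (Set.inter_comm u v ▸ huv)

lemma exists_eq_zero_of_norm_lt_of_forall_mem_frontier_le {E : Type*} [NormedAddCommGroup E]
    [NormedSpace ℂ E] [Nontrivial E] {f : E → ℂ} {V : Set E} (hV : Bornology.IsBounded V)
    (hf : DiffContOnCl ℂ f V) {R : ℝ} (hfr : ∀ z ∈ frontier V, R ≤ ‖f z‖) {x : E} (hxV : x ∈ V)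
    (hx : ‖f x‖ < R) : ∃ z ∈ V, f z = 0 := by
  by_contra! hne
  have hR : 0 < R := (norm_nonneg _).trans_lt hx
  have hne_closure : ∀ z ∈ closure V, f z ≠ 0 := fun z hz => by
    rw [closure_eq_self_union_frontier] at hz
    exact hz.elim (hne z) fun hz => norm_pos_iff.1 (hR.trans_le (hfr z hz))
  have hinv : ‖(f x)⁻¹‖ ≤ R⁻¹ :=
    Complex.norm_le_of_forall_mem_frontier_norm_le hV (hf.inv hne_closure)
      (fun z hz => (norm_inv (f z)).trans_le (inv_anti₀ hR (hfr z hz))) (subset_closure hxV)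
  rw [norm_inv, inv_le_inv₀ (norm_pos_iff.2 (hne x hxV)) hR] at hinv
  exact hinv.not_gt hx

/-- `R` is an escape radius of a sequence of nonconstant polynomials: an orbit `n ↦ q n z` that
leaves the open disc of radius `R` never comes back, while a zero is always followed by a point of
that disc. -/
structure IsEscapeRadius (q : ℕ → ℂ[X]) (R : ℝ) : Prop where
  natDegree_pos (n : ℕ) : 0 < (q n).natDegree
  lt_norm_succ (n : ℕ) (z : ℂ) : R ≤ ‖(q n).eval z‖ → R < ‖(q (n + 1)).eval z‖
  norm_succ_lt (n : ℕ) (z : ℂ) : (q n).eval z = 0 → ‖(q (n + 1)).eval z‖ < R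

/-- The points whose orbit `n ↦ q n z` stays in the open disc of radius `R`. -/
def nonescapingSet (q : ℕ → ℂ[X]) (R : ℝ) : Set ℂ :=
  {z | ∀ n, ‖(q n).eval z‖ < R}

namespace IsEscapeRadius

variable {q : ℕ → ℂ[X]} {R : ℝ} {m n : ℕ} {z : ℂ}

lemma pos (H : IsEscapeRadius q R) : 0 < R := by
  obtain ⟨z, hz⟩ := IsAlgClosed.exists_root (q 0)
    (natDegree_pos_iff_degree_pos.1 (H.natDegree_pos 0)).ne'
  exact (norm_nonneg _).trans_lt (H.norm_succ_lt 0 z hz)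

lemma lt_norm_of_lt (H : IsEscapeRadius q R) (hmn : m < n) (hz : R ≤ ‖(q m).eval z‖) :
    R < ‖(q n).eval z‖ := by
  induction n, hmn using Nat.le_induction with
  | base => exact H.lt_norm_succ m z hz
  | succ n _ ih => exact H.lt_norm_succ n z ih.le

lemma exists_mem_norm_lt (H : IsEscapeRadius q R) {V : Set ℂ} (hV : V.Nonempty)
    (hVn : V ⊆ {z | ‖(q n).eval z‖ < R}) (hfr : Disjoint {z | ‖(q n).eval z‖ < R} (frontier V))
    (hnm : n ≤ m) : ∃ z ∈ V, ‖(q m).eval z‖ < R := by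
  have hbdd : Bornology.IsBounded V :=
    (isCompact_setOf_norm_eval_le (H.natDegree_pos n) R).isBounded.subset
      (hVn.trans fun _ hz => le_of_lt (Set.mem_ofPred.1 hz))
  induction m, hnm using Nat.le_induction with
  | base => exact hV.imp fun z hz => ⟨hz, hVn hz⟩
  | succ m hnm ih =>
    obtain ⟨x, hxV, hx⟩ := ih
    have hfr_m : ∀ z ∈ frontier V, R ≤ ‖(q m).eval z‖ := fun z hz => by
      have hz_n : R ≤ ‖(q n).eval z‖ := not_lt.1 (Set.disjoint_right.1 hfr hz)
      rcases hnm.eq_or_lt with rfl | hlt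
      exacts [hz_n, (H.lt_norm_of_lt hlt hz_n).le]
    obtain ⟨z, hzV, hz⟩ := exists_eq_zero_of_norm_lt_of_forall_mem_frontier_le hbdd
      (q m).differentiable.diffContOnCl hfr_m hxV hx
    exact ⟨z, hzV, H.norm_succ_lt m z hz⟩

lemma inter_nonescapingSet_nonempty (H : IsEscapeRadius q R) {V : Set ℂ} (hV : V.Nonempty)
    (hVn : V ⊆ {z | ‖(q n).eval z‖ < R})
    (hfr : Disjoint {z | ‖(q n).eval z‖ < R} (frontier V)) :
    (V ∩ nonescapingSet q R).Nonempty := by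
  have hclosed : ∀ m, IsClosed {z | ‖(q m).eval z‖ ≤ R} := fun m =>
    isClosed_le (q m).continuous.norm continuous_const
  obtain ⟨z, hz⟩ := IsCompact.nonempty_iInter_of_sequence_nonempty_isCompact_isClosed
    (fun k => closure V ∩ {z | ‖(q (n + k)).eval z‖ ≤ R})
    (fun k z hz => ⟨hz.1, not_lt.1 fun h => (H.lt_norm_succ _ z h.le).not_ge hz.2⟩)
    (fun k => (H.exists_mem_norm_lt hV hVn hfr (Nat.le_add_right n k)).imp
      fun z hz => ⟨subset_closure hz.1, hz.2.le⟩)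
    ((isCompact_setOf_norm_eval_le (H.natDegree_pos n) R).inter_left isClosed_closure)
    (fun k => isClosed_closure.inter (hclosed _))
  rw [Set.mem_iInter] at hz
  have hzK : z ∈ nonescapingSet q R := fun m => not_le.1 fun hm =>
    (H.lt_norm_of_lt (by lia : m < n + (m + 1)) hm).not_ge (hz (m + 1)).2
  have hzV : z ∈ V := by
    by_contra hzV
    exact Set.disjoint_left.1 hfr (hzK n) ⟨(hz 0).1, fun h => hzV (interior_subset h)⟩
  exact ⟨z, hzV, hzK⟩

lemma isPreconnected_sublevel (H : IsEscapeRadius q R)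
    (hconn : IsPreconnected (nonescapingSet q R)) (n : ℕ) :
    IsPreconnected {z | ‖(q n).eval z‖ < R} :=
  isPreconnected_of_forall_inter_nonempty hconn (fun _ hz => hz n)
    (isOpen_lt (q n).continuous.norm continuous_const)
    fun _ hVn hV hfr => H.inter_nonescapingSet_nonempty hV hVn hfr

lemma mem_nonescapingSet_of_frequently_critical (H : IsEscapeRadius q R)
    (hconn : IsPreconnected (nonescapingSet q R)) {c : ℂ}
    (hc : ∃ᶠ n in atTop, (q n).derivative.eval c = 0) : c ∈ nonescapingSet q R := by
  by_contra hesc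
  simp only [nonescapingSet, Set.mem_ofPred_eq, not_forall, not_lt] at hesc
  obtain ⟨n, hn⟩ := hesc
  obtain ⟨m, hnm, hm⟩ := frequently_atTop.1 hc (n + 1)
  exact eval_derivative_ne_zero_of_isPreconnected_sublevel (H.natDegree_pos m) H.pos
    (H.isPreconnected_sublevel hconn m) (H.lt_norm_of_lt hnm hn) hm

end IsEscapeRadius

end Sublevels

section Growth

/-- The recursion satisfied by the orbits `n ↦ φ_n(z)`. The parameter called `r_{n+2}` in the
paper is `r n` here, as `r_0` and `r_1` do not enter. -/
def IsFiberedOrbit (r : ℕ → ℝ) (f : ℕ → ℂ) : Prop :=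
  ∀ n, f (n + 2) = 1 / (r n : ℂ) * f (n + 1) * f n - (1 / (r n : ℂ) - 1)

namespace IsFiberedOrbit

variable {r : ℕ → ℝ} {f : ℕ → ℂ} {n : ℕ} {δ S R : ℝ}

lemma mul_eq (H : IsFiberedOrbit r f) (hr : r n ≠ 0) :
    (r n : ℂ) * f (n + 2) = f (n + 1) * f n - ((1 - r n : ℝ) : ℂ) := by
  have : (r n : ℂ) ≠ 0 := Complex.ofReal_ne_zero.2 hr
  rw [H n]
  push_cast
  field_simp

lemma mul_norm_le (H : IsFiberedOrbit r f) (hr : r n ∈ Set.Ioc 0 1) :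
    r n * ‖f (n + 2)‖ ≤ ‖f (n + 1)‖ * ‖f n‖ + (1 - r n) := by
  have h := norm_sub_le (f (n + 1) * f n) ((1 - r n : ℝ) : ℂ)
  rwa [← H.mul_eq hr.1.ne', norm_mul, norm_mul, Complex.norm_of_nonneg hr.1.le,
    Complex.norm_of_nonneg (sub_nonneg.2 hr.2)] at h

lemma norm_mul_norm_le (H : IsFiberedOrbit r f) (hr : r n ∈ Set.Ioc 0 1) :
    ‖f (n + 1)‖ * ‖f n‖ ≤ r n * ‖f (n + 2)‖ + (1 - r n) := by
  have h := norm_add_le ((r n : ℂ) * f (n + 2)) ((1 - r n : ℝ) : ℂ)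
  rwa [H.mul_eq hr.1.ne', sub_add_cancel, ← H.mul_eq hr.1.ne', norm_mul, norm_mul,
    Complex.norm_of_nonneg hr.1.le, Complex.norm_of_nonneg (sub_nonneg.2 hr.2)] at h

lemma norm_mul_norm_le_norm (H : IsFiberedOrbit r f) (hr : r n ∈ Set.Ioc 0 1)
    (h : 1 ≤ ‖f (n + 1)‖ * ‖f n‖) : ‖f (n + 1)‖ * ‖f n‖ ≤ ‖f (n + 2)‖ := by
  refine le_of_mul_le_mul_left ?_ hr.1
  linarith [H.norm_mul_norm_le hr, mul_nonneg (sub_nonneg.2 hr.2) (sub_nonneg.2 h)]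

lemma exists_lt_norm (H : IsFiberedOrbit r f) (hr : ∀ n, r n ∈ Set.Ioc 0 1)
    (h₀ : 1 < ‖f n‖) (h₁ : 1 < ‖f (n + 1)‖) (B : ℝ) : ∃ m, B < ‖f m‖ := by
  let a := min ‖f n‖ ‖f (n + 1)‖
  have ha : 1 < a := lt_min h₀ h₁
  have hgrow : ∀ k, a ≤ ‖f (n + k)‖ ∧ a ^ (k + 1) ≤ ‖f (n + k + 1)‖ := by
    intro k
    induction k with
    | zero => exact ⟨min_le_left _ _, (pow_one a).trans_le (min_le_right _ _)⟩
    | succ k ih =>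
      refine ⟨(le_self_pow₀ ha.le k.succ_ne_zero).trans ih.2, ?_⟩
      have hmul : a ^ (k + 1) * a ≤ ‖f (n + k + 1)‖ * ‖f (n + k)‖ := by
        gcongr
        exacts [ih.2, ih.1]
      have hone : 1 ≤ a ^ (k + 1) * a := by
        simpa only [pow_succ] using one_le_pow₀ (n := k + 2) ha.le
      exact hmul.trans (H.norm_mul_norm_le_norm (hr _) (hone.trans hmul))
  obtain ⟨k, hk⟩ := pow_unbounded_of_one_lt B ha
  exact ⟨n + k + 1, hk.trans_le ((pow_le_pow_right₀ ha.le k.le_succ).trans (hgrow k).2)⟩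

lemma one_lt_norm_succ (H : IsFiberedOrbit r f) (hr : ∀ n, r n ∈ Set.Ioc 0 1)
    (hδ : ∀ n, δ ≤ r n) (hS : 1 ≤ S) (hδS : 2 ≤ δ * S) (h₀ : S ≤ ‖f 0‖ → 1 < ‖f 1‖)
    (h₁ : S ≤ ‖f 1‖ → 1 < ‖f 0‖) (hn : S ≤ ‖f n‖) : 1 < ‖f (n + 1)‖ := by
  have hprev : ∀ n, S ≤ ‖f (n + 1)‖ → ‖f (n + 2)‖ ≤ 1 → S * ‖f n‖ ≤ 1 := fun n hn hn' => by
    have hprod : ‖f (n + 1)‖ * ‖f n‖ ≤ 1 := by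
      linarith [H.norm_mul_norm_le (hr n), mul_le_of_le_one_right (hr n).1.le hn']
    exact (mul_le_mul_of_nonneg_right hn (norm_nonneg _)).trans hprod
  induction n using Nat.twoStepInduction with
  | zero => exact h₀ hn
  | one =>
    by_contra! hle
    nlinarith [hprev 0 hn hle, h₁ hn]
  | more n ih _ =>
    by_contra! hle
    have hsmall : S * ‖f (n + 1)‖ ≤ 1 := hprev (n + 1) hn hle
    have hlarge : 1 ≤ ‖f (n + 1)‖ * ‖f n‖ := by
      linarith [H.mul_norm_le (hr n), (hr n).1, mul_le_mul (hδ n) hn (by linarith) (hr n).1.le]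
    have hnS : S ≤ ‖f n‖ := by nlinarith [norm_nonneg (f n), norm_nonneg (f (n + 1))]
    nlinarith [ih hnS]

lemma one_lt_norm_of_le_norm_succ (H : IsFiberedOrbit r f) (hr : ∀ n, r n ∈ Set.Ioc 0 1)
    (hδ : ∀ n, δ ≤ r n) (hS : 1 ≤ S) (hδS : 2 ≤ δ * S) (hSR : S ≤ R) (hδR : S + 1 ≤ δ * R)
    (h₀ : S ≤ ‖f 0‖ → 1 < ‖f 1‖) (h₁ : S ≤ ‖f 1‖ → 1 < ‖f 0‖) (hn : R ≤ ‖f (n + 1)‖) :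
    1 < ‖f n‖ := by
  cases n with
  | zero => exact h₁ (hSR.trans hn)
  | succ n =>
    by_contra! hle
    have hnS : S ≤ ‖f n‖ := by
      linarith [H.mul_norm_le (hr n), mul_le_of_le_one_left (norm_nonneg (f n)) hle, (hr n).1,
        mul_le_mul (hδ n) hn (by linarith) (hr n).1.le]
    exact (H.one_lt_norm_succ hr hδ hS hδS h₀ h₁ hnS).not_ge hle

lemma lt_norm_succ_succ (H : IsFiberedOrbit r f) (hr : ∀ n, r n ∈ Set.Ioc 0 1)
    (hδ : ∀ n, δ ≤ r n) (hS : 1 ≤ S) (hδS : 2 ≤ δ * S) (hSR : S ≤ R) (hδR : S + 1 ≤ δ * R)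
    (h₀ : S ≤ ‖f 0‖ → 1 < ‖f 1‖) (h₁ : S ≤ ‖f 1‖ → 1 < ‖f 0‖) (hn : R ≤ ‖f (n + 1)‖) :
    R < ‖f (n + 2)‖ := by
  have hone := H.one_lt_norm_of_le_norm_succ hr hδ hS hδS hSR hδR h₀ h₁ hn
  have hprod : R < ‖f (n + 1)‖ * ‖f n‖ := by nlinarith
  exact hprod.trans_le (H.norm_mul_norm_le_norm (hr n) (by linarith))

lemma norm_succ_succ_lt (H : IsFiberedOrbit r f) (hr : r n ∈ Set.Ioc 0 1) (hδ : δ ≤ r n)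
    (hδR : 1 < δ * R) (hR : 0 ≤ R) (hn : f (n + 1) = 0) : ‖f (n + 2)‖ < R := by
  have h := H.mul_norm_le hr
  rw [hn, norm_zero, zero_mul, zero_add] at h
  refine lt_of_mul_lt_mul_left ?_ hr.1.le
  linarith [hr.1, mul_le_mul_of_nonneg_right hδ hR]

end IsFiberedOrbit

end Growth

section FilledJuliaSet

/-- The polynomial `φ_n`, whose evaluation is `phiSeq p h n`. -/
noncomputable def phiPoly (p : ℕ → ℝ) (h : ℂ[X]) : ℕ → ℂ[X]
  | 0 => X
  | 1 => h
  | (n + 2) => C (1 / (rr p (n + 2) : ℂ)) * phiPoly p h (n + 1) * phiPoly p h n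
      - C (1 / (rr p (n + 2) : ℂ) - 1)

variable {p : ℕ → ℝ} {h : ℂ[X]}

lemma eval_phiPoly (p : ℕ → ℝ) (h : ℂ[X]) (n : ℕ) (z : ℂ) :
    (phiPoly p h n).eval z = phiSeq p h n z := by
  induction n using Nat.twoStepInduction with
  | zero => exact eval_X
  | one => rfl
  | more n ih₀ ih₁ => simp only [phiPoly, phiSeq, eval_sub, eval_mul, eval_C, ih₀, ih₁]

lemma natDegree_phiPoly_pos (hr : ∀ n, rr p (n + 2) ≠ 0) (hh : 0 < h.natDegree) (n : ℕ) :
    0 < (phiPoly p h n).natDegree := by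
  induction n using Nat.twoStepInduction with
  | zero => simp [phiPoly]
  | one => exact hh
  | more n ih₀ ih₁ =>
    have hC : 1 / (rr p (n + 2) : ℂ) ≠ 0 := one_div_ne_zero (Complex.ofReal_ne_zero.2 (hr n))
    rw [phiPoly, natDegree_sub_C, mul_assoc, natDegree_C_mul hC,
      natDegree_mul (ne_zero_of_natDegree_gt ih₁) (ne_zero_of_natDegree_gt ih₀)]
    exact Nat.add_pos_left ih₁ _

lemma eval_derivative_phiPoly_zero (hc0 : h.coeff 0 = 0) (hc1 : h.coeff 1 = 0) (n : ℕ) :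
    (phiPoly p h (n + 1)).derivative.eval 0 = 0 := by
  have heval : h.eval 0 = 0 := by rw [← coeff_zero_eq_eval_zero, hc0]
  have hder : h.derivative.eval 0 = 0 := by
    rw [← coeff_zero_eq_eval_zero, coeff_derivative, zero_add, hc1, zero_mul]
  induction n using Nat.twoStepInduction with
  | zero => exact hder
  | one => simp [phiPoly, heval, hder]
  | more n ih₀ ih₁ =>
    rw [phiPoly]
    simp [ih₀, ih₁]

lemma isFiberedOrbit_phiSeq (p : ℕ → ℝ) (h : ℂ[X]) (z : ℂ) :
    IsFiberedOrbit (fun n => rr p (n + 2)) (fun n => phiSeq p h n z) :=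
  fun _ => rfl

lemma exists_norm_lt_norm_eval (hh : 1 < h.natDegree) :
    ∃ B, ∀ z, B ≤ ‖z‖ → ‖z‖ < ‖h.eval z‖ := by
  have hdivX : 0 < h.divX.degree := by
    rw [← natDegree_pos_iff_degree_pos, natDegree_divX_eq_natDegree_tsub_one]
    lia
  have hlarge := h.divX.tendsto_norm_atTop hdivX tendsto_norm_cobounded_atTop
    |>.eventually_ge_atTop 2
  obtain ⟨B, -, hB⟩ := hasBasis_cobounded_norm.eventually_iff.1 hlarge
  refine ⟨max B (‖h.coeff 0‖ + 1), fun z hz => ?_⟩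
  have hsplit : h.eval z = h.divX.eval z * z + h.coeff 0 := by
    conv_lhs => rw [← divX_mul_X_add h]
    simp
  have hmul : 2 * ‖z‖ ≤ ‖h.divX.eval z * z‖ := by
    rw [norm_mul]
    gcongr
    exact hB ((le_max_left _ _).trans hz)
  have hsub := norm_sub_le (h.eval z) (h.coeff 0)
  rw [hsplit, add_sub_cancel_right, ← hsplit] at hsub
  linarith [(le_max_right B (‖h.coeff 0‖ + 1)).trans hz]

lemma exists_isEscapeRadius_phiPoly {δ : ℝ} (hδ : 0 < δ)
    (hr : ∀ n, rr p (n + 2) ∈ Set.Icc δ 1) (hh : 1 < h.natDegree) :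
    ∃ R, 1 < R ∧ IsEscapeRadius (phiPoly p h) R := by
  have hr' : ∀ n, rr p (n + 2) ∈ Set.Ioc 0 1 := fun n => ⟨hδ.trans_le (hr n).1, (hr n).2⟩
  obtain ⟨B, hB⟩ := exists_norm_lt_norm_eval hh
  obtain ⟨M, hM⟩ :=
    (isCompact_closedBall (0 : ℂ) 1).exists_bound_of_continuousOn h.continuous.continuousOn
  have hM' : ∀ z : ℂ, ‖z‖ ≤ 1 → ‖h.eval z‖ ≤ M := fun z hz => hM z (mem_closedBall_zero_iff.2 hz)
  obtain ⟨S, hSδ, hSB, hSM, hS⟩ : ∃ S, 2 / δ ≤ S ∧ B ≤ S ∧ M < S ∧ 1 ≤ S :=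
    ((eventually_ge_atTop _).and ((eventually_ge_atTop _).and
      ((eventually_gt_atTop _).and (eventually_ge_atTop _)))).exists
  obtain ⟨R, hRδ, hSR⟩ : ∃ R, (S + 1) / δ ≤ R ∧ S < R :=
    ((eventually_ge_atTop _).and (eventually_gt_atTop _)).exists
  have hδS : 2 ≤ δ * S := (div_le_iff₀' hδ).1 hSδ
  have hδR : S + 1 ≤ δ * R := (div_le_iff₀' hδ).1 hRδ
  refine ⟨R, hS.trans_lt hSR, natDegree_phiPoly_pos (fun n => (hr' n).1.ne') (by lia), ?_, ?_⟩
  all_goals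
    intro n z hz
    have H := isFiberedOrbit_phiSeq p h z
    simp only [eval_phiPoly] at hz ⊢
  · cases n with
    | zero => exact hz.trans_lt (hB z (hSB.trans (hSR.le.trans hz)))
    | succ n =>
      refine H.lt_norm_succ_succ hr' (fun n => (hr n).1) hS hδS hSR.le hδR
        (fun h₀ => hS.trans_lt (h₀.trans_lt (hB z (hSB.trans h₀)))) (fun h₁ => ?_) hz
      exact not_le.1 fun h₀ => ((hM' z h₀).trans_lt hSM).not_ge h₁
  · cases n with
    | zero => exact (hM' z (by simp [show z = 0 from hz])).trans_lt (hSM.trans hSR)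
    | succ n => exact H.norm_succ_succ_lt (hr' n) (hr n).1 (by linarith) (by linarith) hz

lemma Fset_eq_nonescapingSet {R : ℝ} (hr : ∀ n, rr p (n + 2) ∈ Set.Ioc 0 1) (hR : 1 < R)
    (H : IsEscapeRadius (phiPoly p h) R) : Fset p h = nonescapingSet (phiPoly p h) R := by
  ext z
  refine ⟨fun ⟨B, hB⟩ n => not_le.1 fun hn => ?_, fun hz => ⟨R, fun n => ?_⟩⟩
  · have hn' := H.lt_norm_succ n z hn
    rw [eval_phiPoly] at hn hn'
    obtain ⟨m, hm⟩ :=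
      (isFiberedOrbit_phiSeq p h z).exists_lt_norm hr (hR.trans_le hn) (hR.trans hn') B
    exact hm.not_ge (hB m)
  · exact eval_phiPoly p h n z ▸ (hz n).le

lemma exists_pos_forall_le_of_liminf_pos {u : ℕ → ℝ} {k : ℕ} (hu : ∀ i, k ≤ i → 0 < u i)
    (hlim : 0 < liminf u atTop) : ∃ δ > 0, ∀ i, k ≤ i → δ ≤ u i := by
  have hbdd : IsBoundedUnder (· ≥ ·) atTop u :=
    isBoundedUnder_of_eventually_ge ((eventually_ge_atTop k).mono fun i hi => (hu i hi).le)
  obtain ⟨M, hM⟩ := eventually_atTop.1 (eventually_lt_of_lt_liminf (half_lt_self hlim) hbdd)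
  obtain ⟨j, hj, hmin⟩ :=
    (Finset.Icc k (max k M)).exists_min_image u (Finset.nonempty_Icc.2 (le_max_left k M))
  refine ⟨min (u j) (liminf u atTop / 2),
    lt_min (hu j (Finset.mem_Icc.1 hj).1) (half_pos hlim), fun i hi => ?_⟩
  rcases le_total i M with hiM | hiM
  · exact (min_le_left _ _).trans (hmin i (Finset.mem_Icc.2 ⟨hi, hiM.trans (le_max_right k M)⟩))
  · exact (min_le_right _ _).trans (hM i hiM).le

end FilledJuliaSet

section CriticalOrbit

variable {p : ℕ → ℝ} {h : ℂ[X]}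

lemma one_lt_norm_phiSeq_three_zero (hc0 : h.coeff 0 = 0) (hp3 : 0 < p 3) (hp3' : p 3 < 1 / 2) :
    1 < ‖phiSeq p h 3 0‖ := by
  have heval : h.eval 0 = 0 := by rw [← coeff_zero_eq_eval_zero, hc0]
  have hphi : phiSeq p h 3 0 = ((-(1 / p 3 - 1) : ℝ) : ℂ) := by simp [phiSeq, heval, rr]
  have hinv : 2 < 1 / p 3 := (lt_one_div two_pos hp3).2 hp3'
  rw [hphi, Complex.norm_real, norm_neg]
  exact (by linarith : 1 < 1 / p 3 - 1).trans_le (Real.le_norm_self _)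

lemma one_lt_norm_phiSeq_four_zero (hc0 : h.coeff 0 = 0) (hp3 : 0 < p 3) (hp3' : p 3 < 1 / 2)
    (hp2 : p 2 = 1 ∨ 0 < p 2 ∧ p 2 < 1 - p 3) : 1 < ‖phiSeq p h 4 0‖ := by
  have heval : h.eval 0 = 0 := by rw [← coeff_zero_eq_eval_zero, hc0]
  have hphi : phiSeq p h 4 0 =
      (((1 / p 3 - 1) * (1 / p 3 * (1 / p 2 - 1) - 1) : ℝ) : ℂ) := by
    simp only [phiSeq, heval, rr, Nat.reduceAdd, Nat.reduceDiv]
    push_cast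
    ring
  have hinv : 2 < 1 / p 3 := (lt_one_div two_pos hp3).2 hp3'
  rw [hphi, Complex.norm_real]
  rcases hp2 with hp2 | ⟨hp2, hp23⟩
  · have hval : (1 / p 3 - 1) * (1 / p 3 * (1 / p 2 - 1) - 1) = -(1 / p 3 - 1) := by
      rw [hp2]
      ring
    rw [hval, norm_neg]
    exact (by linarith : 1 < 1 / p 3 - 1).trans_le (Real.le_norm_self _)
  · have hpos : 0 < 1 - p 3 := hp2.trans hp23
    refine lt_of_lt_of_le ?_ (Real.le_norm_self _)
    calc (1 : ℝ) = (1 / p 3 - 1) * (1 / p 3 * (1 / (1 - p 3) - 1) - 1) := by field_simp; ring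
      _ < (1 / p 3 - 1) * (1 / p 3 * (1 / p 2 - 1) - 1) := by
        gcongr
        linarith

lemma zero_notMem_Fset (hp : ∀ n, rr p (n + 2) ∈ Set.Ioc 0 1) (hc0 : h.coeff 0 = 0)
    (hp3 : p 3 < 1 / 2) (hp2 : p 2 = 1 ∨ 0 < p 2 ∧ p 2 < 1 - p 3) : 0 ∉ Fset p h := by
  rintro ⟨B, hB⟩
  have hp3_pos : 0 < p 3 := (hp 1).1
  obtain ⟨m, hm⟩ := (isFiberedOrbit_phiSeq p h 0).exists_lt_norm hp
    (one_lt_norm_phiSeq_three_zero hc0 hp3_pos hp3)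
    (one_lt_norm_phiSeq_four_zero hc0 hp3_pos hp3 hp2) B
  exact hm.not_ge (hB m)

end CriticalOrbit

theorem stmt17_general {p : ℕ → ℝ} (hp : ∀ i, 2 ≤ i → 0 < p i ∧ p i ≤ 1) {h : ℂ[X]}
    (hne : h ≠ 0) (hc0 : h.coeff 0 = 0) (hc1 : h.coeff 1 = 0) (hlim : 0 < liminf p atTop)
    (hesc : 0 ∉ Fset p h) : ¬ IsPreconnected (Fset p h) := by
  intro hconn
  obtain ⟨δ, hδ, hδp⟩ := exists_pos_forall_le_of_liminf_pos (fun i hi => (hp i hi).1) hlim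
  have hr : ∀ n, rr p (n + 2) ∈ Set.Icc δ 1 := fun n =>
    ⟨hδp _ (by lia), (hp _ (by lia)).2⟩
  have hh : 1 < h.natDegree := by
    by_contra! hdeg
    refine hne (ext fun n => ?_)
    match n with
    | 0 => exact hc0
    | 1 => exact hc1
    | n + 2 => exact coeff_eq_zero_of_natDegree_lt (by lia)
  obtain ⟨R, hR, H⟩ := exists_isEscapeRadius_phiPoly hδ hr hh
  rw [Fset_eq_nonescapingSet (fun n => ⟨hδ.trans_le (hr n).1, (hr n).2⟩) hR H] at hconn hesc
  refine hesc (H.mem_nonescapingSet_of_frequently_critical hconn ?_)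
  exact (tendsto_add_atTop_nat 1).frequently
    (Frequently.of_forall (eval_derivative_phiPoly_zero hc0 hc1))

/-- Let `h(z) = a₂z² + ⋯ + aₙzⁿ` (a nonzero polynomial with zero
constant and linear coefficients) and suppose `liminf p i > 0`.  If `p 3 < 1/2` and
either `p 2 = 1` or `0 < p 2 < 1 - p 3`, then `F_h` is not connected. -/
theorem stmt17 (p : ℕ → ℝ) (hp : ∀ i, 1 ≤ i → 0 < p i ∧ p i ≤ 1)
    (h : Polynomial ℂ) (hne : h ≠ 0) (hc0 : h.coeff 0 = 0) (hc1 : h.coeff 1 = 0)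
    (hlim : 0 < Filter.liminf p Filter.atTop)
    (hp3 : p 3 < 1/2) (hp2 : p 2 = 1 ∨ (0 < p 2 ∧ p 2 < 1 - p 3)) :
    ¬ IsConnected (Fset p h) := by
  exact fun hconn => stmt17_general (fun i hi => hp i (by lia)) hne hc0 hc1 hlim
    (zero_notMem_Fset (fun n => hp _ (by lia)) hc0 hp3 hp2) hconn.isPreconnected
end

section
/- Suppose liminf_{i→∞} p_i > 0. If there exists k ≥ 2 such that p_i = 1 for all i ∈ {2, 3, …, k} and p_{k+1} < 1/2, then the set E is not connected. -/
/-- The fibered filled Julia set `E = {z : (q_{F_n}(z))ₙ is bounded}`. -/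
def Eset (p : ℕ → ℝ) : Set ℂ := {z : ℂ | ∃ C : ℝ, ∀ n : ℕ, ‖qF p z n‖ ≤ C}

/-!
In the coordinate `w = q_{F_0}(z)` the iterates are the monomials `w ^ fib (n + 2)` as long as
`r_1 = ⋯ = r_n = 1`. Put `M = fib (2k)` and `N = fib (2k + 1)`. As `M` and `N` are coprime, some odd
multiple `θ < π` of `π / N` satisfies `cos (M θ) ≥ 0`, so on the rays `arg w = ± θ` the monomial
`w ^ N` is nonpositive and `w ^ M` has nonnegative real part. Since the next two parameters are
`< 1/2`, the next two iterates then have real part `< -1`, and two consecutive iterates outside the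
unit disc force escape. Hence the frontier of the sector of radius `2` bounded by these rays and
containing the negative axis misses `E`. By the open mapping theorem infinitely many iterates vanish
somewhere in the sector, so by compactness a point of the sector does not escape; the point `1 ∈ E`
lies outside.
-/

open Filter

section Topology

variable {X Y : Type*} [TopologicalSpace X] [TopologicalSpace Y]

lemma subset_of_isPreconnected_of_disjoint_frontier {s t : Set X} (hs : IsPreconnected s)
    (hd : Disjoint s (frontier t)) (hst : (s ∩ t).Nonempty) : s ⊆ t := by
  have mem_interior : ∀ x ∈ s, x ∈ closure t → x ∈ interior t := fun x hxs hxt =>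
    by_contra fun hx => hd.notMem_of_mem_left hxs ⟨hxt, hx⟩
  have hcover : s ⊆ interior t ∪ (closure t)ᶜ := fun x hxs =>
    (em (x ∈ closure t)).imp (mem_interior x hxs) id
  have hdisj : Disjoint (interior t) (closure t)ᶜ :=
    Set.disjoint_compl_right_iff_subset.mpr interior_subset_closure
  have hne : (s ∩ interior t).Nonempty :=
    hst.imp fun x hx => ⟨hx.1, mem_interior x hx.1 (subset_closure hx.2)⟩
  exact (hs.subset_left_of_subset_union isOpen_interior isClosed_closure.isOpen_compl hdisj hcover
    hne).trans interior_subset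

lemma frontier_image_subset_image_frontier [T2Space Y] {f : X → Y} {s : Set X}
    (hs : IsCompact (closure s)) (hf : ContinuousOn f (closure s)) (hfs : IsOpen (f '' s)) :
    frontier (f '' s) ⊆ f '' frontier s := by
  rw [hfs.frontier_eq]
  rintro y ⟨hy, hys⟩
  obtain ⟨x, hx, rfl⟩ : y ∈ f '' closure s :=
    closure_minimal (Set.image_mono subset_closure) (hs.image_of_continuousOn hf).isClosed hy
  exact ⟨x, ⟨hx, fun hxi => hys ⟨x, interior_subset hxi, rfl⟩⟩, rfl⟩

end Topology

lemma closedBall_subset_image_of_lt_norm_on_frontier {f : ℂ → ℂ} (hf : Differentiable ℂ f)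
    {Ω : Set ℂ} (hΩ : IsOpen Ω) (hb : Bornology.IsBounded Ω) {R : ℝ}
    (hfr : ∀ z ∈ frontier Ω, R < ‖f z‖) (hz : ∃ z ∈ Ω, ‖f z‖ ≤ R) :
    Metric.closedBall 0 R ⊆ f '' Ω := by
  obtain ⟨z, hzΩ, hzR⟩ := hz
  have hopen : IsOpen (f '' Ω) := by
    rcases (Complex.analyticOnNhd_univ_iff_differentiable.mpr hf).is_constant_or_isOpenMap with
      ⟨c, hc⟩ | hmap
    · obtain ⟨w, hw⟩ : (frontier Ω).Nonempty := nonempty_frontier_iff.mpr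
        ⟨⟨z, hzΩ⟩, fun h => NormedSpace.unbounded_univ ℂ ℂ (h ▸ hb)⟩
      exact absurd (hfr w hw) (by rw [hc w, ← hc z]; exact hzR.not_gt)
    · exact hmap Ω hΩ
  have hdisj : Disjoint (Metric.closedBall 0 R) (frontier (f '' Ω)) := by
    refine Set.disjoint_right.mpr fun y hy => ?_
    obtain ⟨w, hw, rfl⟩ := frontier_image_subset_image_frontier hb.isCompact_closure
      hf.continuous.continuousOn hopen hy
    simpa only [mem_closedBall_zero_iff, not_le] using hfr w hw
  exact subset_of_isPreconnected_of_disjoint_frontier (convex_closedBall 0 R).isPreconnected hdisj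
    ⟨f z, mem_closedBall_zero_iff.mpr hzR, z, hzΩ, rfl⟩

section ConvexCombination

variable {A : Type*} [NormedRing A] [NormOneClass A] [NormedSpace ℝ A] {r : ℝ} {u y : A}

lemma norm_le_of_eq_smul_add_smul_one (hr : 0 < r ∧ r ≤ 1) (h : u = r • y + (1 - r) • 1) :
    ‖u‖ ≤ r * ‖y‖ + (1 - r) :=
  calc ‖u‖ ≤ ‖r • y‖ + ‖(1 - r) • (1 : A)‖ := h ▸ norm_add_le _ _
    _ = r * ‖y‖ + (1 - r) := by
      rw [norm_smul_of_nonneg hr.1.le, norm_smul_of_nonneg (sub_nonneg.mpr hr.2), norm_one, mul_one]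

lemma mul_norm_le_of_eq_smul_add_smul_one (hr : 0 < r ∧ r ≤ 1) (h : u = r • y + (1 - r) • 1) :
    r * ‖y‖ ≤ ‖u‖ + (1 - r) :=
  calc r * ‖y‖ = ‖u - (1 - r) • (1 : A)‖ := by
        rw [h, add_sub_cancel_right, norm_smul_of_nonneg hr.1.le]
    _ ≤ ‖u‖ + ‖(1 - r) • (1 : A)‖ := norm_sub_le _ _
    _ = ‖u‖ + (1 - r) := by rw [norm_smul_of_nonneg (sub_nonneg.mpr hr.2), norm_one, mul_one]

lemma norm_le_norm_of_eq_smul_add_smul_one (hr : 0 < r ∧ r ≤ 1) (h : u = r • y + (1 - r) • 1)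
    (hu : 1 ≤ ‖u‖) : ‖u‖ ≤ ‖y‖ := by
  have hle := norm_le_of_eq_smul_add_smul_one hr h
  refine le_of_mul_le_mul_left ?_ hr.1
  nlinarith [mul_nonneg (sub_nonneg.mpr hr.2) (sub_nonneg.mpr hu)]

end ConvexCombination

lemma re_lt_neg_one_of_eq_smul_add_smul_one {r : ℝ} {u y : ℂ} (hr : 0 < r) (hr' : r < 1 / 2)
    (h : u = r • y + (1 - r) • 1) (hu : u.re ≤ 0) : y.re < -1 := by
  have hre : u.re = r * y.re + (1 - r) := by simp [h]
  nlinarith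

/-- A sequence obeying the recursion of the `q_{F_n}` with parameters `r`, solved for the product
so that no division occurs: `x (n + 1) * x n` is the convex combination of `x (n + 2)` and `1` with
weights `r (n + 2)` and `1 - r (n + 2)`. -/
def IsFibOrbit {A : Type*} [Ring A] [Module ℝ A] (r : ℕ → ℝ) (x : ℕ → A) : Prop :=
  ∀ n, x (n + 1) * x n = r (n + 2) • x (n + 2) + (1 - r (n + 2)) • 1

namespace IsFibOrbit

section Norm

variable {A : Type*} [NormedDivisionRing A] [NormedSpace ℝ A] {r : ℕ → ℝ} {x : ℕ → A}

lemma mul_norm_le_norm_add_two (hx : IsFibOrbit r x) (hr : ∀ n, 0 < r n ∧ r n ≤ 1) {n : ℕ}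
    (h₁ : 1 ≤ ‖x (n + 1)‖) (h₀ : 1 ≤ ‖x n‖) : ‖x (n + 1)‖ * ‖x n‖ ≤ ‖x (n + 2)‖ := by
  rw [← norm_mul]
  refine norm_le_norm_of_eq_smul_add_smul_one (hr (n + 2)) (hx n) ?_
  rw [norm_mul]
  exact one_le_mul_of_one_le_of_one_le h₁ h₀

lemma pow_fib_le_norm (hx : IsFibOrbit r x) (hr : ∀ n, 0 < r n ∧ r n ≤ 1) {m : ℕ} {δ : ℝ}
    (hδ : 1 ≤ δ) (h₀ : δ ≤ ‖x m‖) (h₁ : δ ≤ ‖x (m + 1)‖) (i : ℕ) :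
    δ ^ Nat.fib (i + 1) ≤ ‖x (m + i)‖ := by
  induction i using Nat.twoStepInduction with
  | zero => simpa using h₀
  | one => simpa using h₁
  | more i ih₀ ih₁ =>
    calc δ ^ Nat.fib (i + 2 + 1) = δ ^ Nat.fib (i + 1 + 1) * δ ^ Nat.fib (i + 1) := by
          rw [← pow_add, Nat.fib_add_two (n := i + 1), add_comm]
      _ ≤ ‖x (m + i + 1)‖ * ‖x (m + i)‖ := by gcongr; exact ih₁
      _ ≤ ‖x (m + i + 2)‖ := hx.mul_norm_le_norm_add_two hr
          ((one_le_pow₀ hδ).trans ih₁) ((one_le_pow₀ hδ).trans ih₀)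

lemma one_lt_norm_of_le (hx : IsFibOrbit r x) (hr : ∀ n, 0 < r n ∧ r n ≤ 1) {m : ℕ}
    (h₀ : 1 < ‖x m‖) (h₁ : 1 < ‖x (m + 1)‖) {n : ℕ} (hmn : m ≤ n) : 1 < ‖x n‖ := by
  obtain ⟨i, rfl⟩ := Nat.exists_eq_add_of_le hmn
  have hδ := lt_min h₀ h₁
  exact (one_lt_pow₀ hδ (Nat.fib_pos.mpr i.succ_pos).ne').trans_le
    (hx.pow_fib_le_norm hr hδ.le (min_le_left _ _) (min_le_right _ _) i)

lemma not_bounded_of_one_lt_norm (hx : IsFibOrbit r x) (hr : ∀ n, 0 < r n ∧ r n ≤ 1) {m : ℕ}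
    (h₀ : 1 < ‖x m‖) (h₁ : 1 < ‖x (m + 1)‖) : ¬∃ C : ℝ, ∀ n, ‖x n‖ ≤ C := by
  rintro ⟨C, hC⟩
  have hδ := lt_min h₀ h₁
  obtain ⟨i, hi⟩ := pow_unbounded_of_one_lt C hδ
  have hfib : i ≤ Nat.fib (i + 1) := by have := Nat.le_fib_add_one (i + 1); omega
  refine (hC (m + i)).not_gt (hi.trans_le ?_)
  exact (pow_le_pow_right₀ hδ.le hfib).trans
    (hx.pow_fib_le_norm hr hδ.le (min_le_left _ _) (min_le_right _ _) i)

lemma norm_add_two_le_max (hx : IsFibOrbit r x) (hr : ∀ n, 0 < r n ∧ r n ≤ 1) {n : ℕ} {c : ℝ}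
    (hc : 0 < c) (hcr : c ≤ r (n + 2)) (h : 1 < ‖x (n + 2)‖ → ‖x (n + 3)‖ ≤ 1) :
    ‖x (n + 2)‖ ≤ max (2 / c) ‖x n‖ := by
  by_contra! hlt
  obtain ⟨hlt₂, hlt₀⟩ := max_lt_iff.mp hlt
  have hc2 : 2 < c * ‖x (n + 2)‖ := by rwa [div_lt_iff₀' hc] at hlt₂
  have hone : 1 < ‖x (n + 2)‖ := by
    nlinarith [hcr.trans (hr (n + 2)).2, norm_nonneg (x (n + 2))]
  have hprod : ‖x (n + 2)‖ * ‖x (n + 1)‖ ≤ 1 := by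
    have hstep := norm_le_of_eq_smul_add_smul_one (hr (n + 3)) (hx (n + 1))
    rw [norm_mul] at hstep
    nlinarith [h hone, (hr (n + 3)).1]
  have hgrow : c * ‖x (n + 2)‖ ≤ ‖x (n + 1)‖ * ‖x n‖ + 1 := by
    have hstep := mul_norm_le_of_eq_smul_add_smul_one (hr (n + 2)) (hx n)
    rw [norm_mul] at hstep
    nlinarith [norm_nonneg (x (n + 2))]
  have hle : c * ‖x (n + 2)‖ * ‖x (n + 2)‖ ≤ 2 * ‖x (n + 2)‖ :=
    calc c * ‖x (n + 2)‖ * ‖x (n + 2)‖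
        ≤ (‖x (n + 1)‖ * ‖x n‖ + 1) * ‖x (n + 2)‖ := by gcongr
      _ = ‖x (n + 2)‖ * ‖x (n + 1)‖ * ‖x n‖ + ‖x (n + 2)‖ := by ring
      _ ≤ 1 * ‖x n‖ + ‖x (n + 2)‖ := by gcongr
      _ ≤ 2 * ‖x (n + 2)‖ := by linarith
  exact (le_of_mul_le_mul_right hle (by positivity)).not_gt hc2

lemma bounded_of_forall_norm_succ_le_one (hx : IsFibOrbit r x) (hr : ∀ n, 0 < r n ∧ r n ≤ 1)
    {c : ℝ} (hc : 0 < c) (hcr : ∀ᶠ n in atTop, c ≤ r n) (h : ∀ m, 1 < ‖x m‖ → ‖x (m + 1)‖ ≤ 1) :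
    ∃ C : ℝ, ∀ n, ‖x n‖ ≤ C := by
  obtain ⟨n₀, hn₀⟩ := eventually_atTop.mp hcr
  set B := max (2 / c) (max ‖x n₀‖ ‖x (n₀ + 1)‖) with hB
  have htail : ∀ i, ‖x (n₀ + i)‖ ≤ B := by
    intro i
    induction i using Nat.twoStepInduction with
    | zero => simp [hB]
    | one => simp [hB]
    | more i ih₀ _ =>
      exact (hx.norm_add_two_le_max hr hc (hn₀ (n₀ + i + 2) (by omega)) (h (n₀ + i + 2))).trans
        (max_le (le_max_left _ _) ih₀)
  have hev : ∀ᶠ n in atTop, ‖x n‖ ≤ B := (eventually_ge_atTop n₀).mono fun n hn => by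
    simpa only [Nat.add_sub_cancel' hn] using htail (n - n₀)
  obtain ⟨C, hC⟩ := (isBoundedUnder_of_eventually_le hev).bddAbove_range
  exact ⟨C, fun n => hC ⟨n, rfl⟩⟩

end Norm

lemma one_lt_norm_of_mul_re_nonpos {r : ℕ → ℝ} {x : ℕ → ℂ} (hx : IsFibOrbit r x)
    (hr : ∀ n, 0 < r n) {n : ℕ} (hr₂ : r (n + 2) < 1 / 2) (hr₃ : r (n + 3) < 1 / 2)
    (hre : (x (n + 1) * x n).re ≤ 0) (him : (x (n + 1) * x n).im = 0)
    (hre₁ : 0 ≤ (x (n + 1)).re) : 1 < ‖x (n + 2)‖ ∧ 1 < ‖x (n + 3)‖ := by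
  have one_lt_norm {w : ℂ} (hw : w.re < -1) : 1 < ‖w‖ :=
    (lt_abs.mpr (Or.inr (by linarith))).trans_le w.abs_re_le_norm
  have hx₂ : (x (n + 2)).re < -1 :=
    re_lt_neg_one_of_eq_smul_add_smul_one (hr _) hr₂ (hx n) hre
  have hx₂im : (x (n + 2)).im = 0 := by
    have : r (n + 2) * (x (n + 2)).im = 0 := by simpa [hx n] using him
    exact (mul_eq_zero.mp this).resolve_left (hr _).ne'
  have hmul : (x (n + 2) * x (n + 1)).re ≤ 0 := by
    rw [Complex.mul_re, hx₂im, zero_mul, sub_zero]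
    exact mul_nonpos_of_nonpos_of_nonneg (by linarith) hre₁
  exact ⟨one_lt_norm hx₂, one_lt_norm
    (re_lt_neg_one_of_eq_smul_add_smul_one (hr _) hr₃ (hx (n + 1)) hmul)⟩

section Family

variable {r : ℕ → ℝ} {F : ℂ → ℕ → ℂ} {Ω : Set ℂ} {m : ℕ}

lemma exists_mem_eq_zero (hF : ∀ z, IsFibOrbit r (F z)) (hr : ∀ n, 0 < r n ∧ r n ≤ 1)
    (hd : ∀ n, Differentiable ℂ fun z => F z n) (hΩ : IsOpen Ω) (hb : Bornology.IsBounded Ω)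
    (hfr : ∀ z ∈ frontier Ω, 1 < ‖F z m‖ ∧ 1 < ‖F z (m + 1)‖) (hz : ∃ z ∈ Ω, ‖F z m‖ ≤ 1)
    (i : ℕ) : ∃ z ∈ Ω, F z (m + 2 * i) = 0 := by
  induction i with
  | zero =>
    exact closedBall_subset_image_of_lt_norm_on_frontier (hd m) hΩ hb
      (fun z hz => (hfr z hz).1) hz (Metric.mem_closedBall_self zero_le_one)
  | succ i ih =>
    set n := m + 2 * i
    have hfr_mul : ∀ z ∈ frontier Ω, 1 < ‖F z (n + 1) * F z n‖ := fun z hz => by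
      have hlarge : ∀ k, m ≤ k → 1 < ‖F z k‖ := fun k =>
        (hF z).one_lt_norm_of_le hr (hfr z hz).1 (hfr z hz).2
      rw [norm_mul]
      exact one_lt_mul_of_lt_of_le (hlarge _ (by omega)) (hlarge _ (by omega)).le
    have hsmall : ∃ z ∈ Ω, ‖F z (n + 1) * F z n‖ ≤ 1 :=
      ih.imp fun z hz => ⟨hz.1, by simp [hz.2]⟩
    have hmem : ((1 - r (n + 2) : ℝ) : ℂ) ∈ Metric.closedBall 0 1 := by
      rw [mem_closedBall_zero_iff, Complex.norm_of_nonneg (sub_nonneg.mpr (hr _).2)]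
      linarith [(hr (n + 2)).1]
    obtain ⟨z, hzΩ, hz⟩ := closedBall_subset_image_of_lt_norm_on_frontier
      ((hd (n + 1)).mul (hd n)) hΩ hb hfr_mul hsmall hmem
    have hsmul : r (n + 2) • F z (n + 2) = 0 := by
      have hrec := (hF z n).symm.trans hz
      rwa [Complex.real_smul (x := 1 - r (n + 2)), mul_one, add_eq_right] at hrec
    exact ⟨z, hzΩ, (smul_eq_zero.mp hsmul).resolve_left (hr _).1.ne'⟩

theorem exists_mem_bounded (hF : ∀ z, IsFibOrbit r (F z)) (hr : ∀ n, 0 < r n ∧ r n ≤ 1)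
    (hd : ∀ n, Differentiable ℂ fun z => F z n) {c : ℝ} (hc : 0 < c)
    (hcr : ∀ᶠ n in atTop, c ≤ r n) (hΩ : IsOpen Ω) (hb : Bornology.IsBounded Ω)
    (hfr : ∀ z ∈ frontier Ω, 1 < ‖F z m‖ ∧ 1 < ‖F z (m + 1)‖) (hz : ∃ z ∈ Ω, ‖F z m‖ ≤ 1) :
    ∃ z ∈ Ω, ∃ C : ℝ, ∀ n, ‖F z n‖ ≤ C := by
  let U (n : ℕ) : Set ℂ := {z | 1 < ‖F z n‖ ∧ 1 < ‖F z (n + 1)‖}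
  have hU_open (n : ℕ) : IsOpen (U n) :=
    (isOpen_lt continuous_const (hd n).continuous.norm).inter
      (isOpen_lt continuous_const (hd (n + 1)).continuous.norm)
  have hU_mono : Monotone U := fun n k hnk z hz =>
    ⟨(hF z).one_lt_norm_of_le hr hz.1 hz.2 hnk,
      (hF z).one_lt_norm_of_le hr hz.1 hz.2 (hnk.trans k.le_succ)⟩
  obtain ⟨z, hz_closure, hzU⟩ : ∃ z ∈ closure Ω, ∀ n, z ∉ U n := by
    by_contra! hcover
    obtain ⟨n, hn⟩ := hb.isCompact_closure.elim_directed_cover U hU_open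
      (fun z hz => Set.mem_iUnion.mpr (hcover z hz)) hU_mono.directed_le
    obtain ⟨w, hwΩ, hw⟩ := exists_mem_eq_zero hF hr hd hΩ hb hfr hz n
    have hwU : 1 < ‖F w (m + 2 * n)‖ := (hU_mono (by omega) (hn (subset_closure hwΩ))).1
    rw [hw, norm_zero] at hwU
    exact zero_lt_one.not_gt hwU
  refine ⟨z, ?_, (hF z).bounded_of_forall_norm_succ_le_one hr hc hcr
    fun n h₀ => not_lt.mp fun h₁ => hzU n ⟨h₀, h₁⟩⟩
  by_contra hzΩ
  exact hzU m (hfr z (hΩ.frontier_eq ▸ ⟨hz_closure, hzΩ⟩))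

end Family

end IsFibOrbit

lemma exists_odd_mul_modEq_one_or_two {M N : ℕ} (h : M.Coprime N) :
    ∃ j : ℤ, Odd j ∧ ∃ t : ℤ, (t = 1 ∨ t = 2) ∧ M * j ≡ t [ZMOD 2 * N] := by
  rcases M.even_or_odd with hM | hM
  · have hN : Odd N := (Nat.coprime_two_left.mp (h.coprime_dvd_left hM.two_dvd))
    obtain ⟨u, v, huv⟩ := Nat.isCoprime_iff_coprime.mpr h
    obtain ⟨b, rfl⟩ := hM
    refine ⟨2 * u + N, (even_two_mul u).add_odd (mod_cast hN), 2, Or.inr rfl, ?_⟩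
    refine Int.modEq_iff_dvd.mpr ⟨v - b, ?_⟩
    push_cast at huv ⊢
    linear_combination -2 * huv
  · obtain ⟨u, v, huv⟩ := Nat.isCoprime_iff_coprime.mpr
      ((Nat.coprime_two_right.mpr hM).mul_right h)
    push_cast at huv
    have hodd : Odd (u * M) := by
      rw [eq_sub_of_add_eq huv]
      exact odd_one.sub_even (((even_two_mul (N : ℤ))).mul_left v)
    refine ⟨u, (Int.odd_mul.mp hodd).1, 1, Or.inl rfl, Int.modEq_iff_dvd.mpr ⟨v, ?_⟩⟩
    linear_combination -huv

lemma exists_odd_natAbs_lt_mul_modEq_one_or_two {M N : ℕ} (h : M.Coprime N) (hN : 3 ≤ N) :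
    ∃ j : ℤ, Odd j ∧ j.natAbs < N ∧ ∃ t : ℤ, (t = 1 ∨ t = 2) ∧ M * j ≡ t [ZMOD 2 * N] := by
  obtain ⟨i, hi, t, ht, hit⟩ := exists_odd_mul_modEq_one_or_two h
  set b := i.bmod (2 * N)
  have hbi : b ≡ i [ZMOD 2 * N] := Int.modEq_iff_dvd.mpr (mod_cast Int.dvd_self_sub_bmod)
  have hbt : M * b ≡ t [ZMOD 2 * N] := (hbi.mul_left M).trans hit
  have hb_odd : Odd b := Int.odd_iff.mpr ((hbi.of_mul_right N).eq.trans (Int.odd_iff.mp hi))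
  have hb_le : b.natAbs ≤ N := by
    have hlower := Int.le_bmod (x := i) (m := 2 * N) (by omega)
    have hupper := Int.bmod_lt (x := i) (m := 2 * N) (by omega)
    omega
  have hb_ne : b.natAbs ≠ N := fun hbN => by
    have hNb : (N : ℤ) ∣ b := Int.natCast_dvd.mpr hbN.symm.dvd
    have hNt : (N : ℤ) ∣ t := (hbt.of_mul_left 2).dvd_iff.mp (hNb.mul_left M)
    have := Int.le_of_dvd (by omega) hNt
    omega
  exact ⟨b, hb_odd, hb_le.lt_of_ne hb_ne, t, ht, hbt⟩

lemma cos_mul_pi_div_eq_of_modEq {N : ℕ} (hN : N ≠ 0) {a b : ℤ} (h : a ≡ b [ZMOD 2 * N]) :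
    Real.cos (a * Real.pi / N) = Real.cos (b * Real.pi / N) := by
  obtain ⟨n, hn⟩ := Int.modEq_iff_dvd.mp h
  have hb : (b : ℝ) = a + 2 * N * n := by exact_mod_cast eq_add_of_sub_eq' hn
  rw [← Real.cos_add_int_mul_two_pi _ n, hb]
  congr 1
  field_simp

lemma exists_odd_lt_cos_nonneg {M N : ℕ} (h : M.Coprime N) (hN : 4 ≤ N) :
    ∃ j : ℕ, Odd j ∧ j < N ∧ 0 ≤ Real.cos (M * (j * Real.pi / N)) := by
  obtain ⟨b, hb_odd, hbN, t, ht, hbt⟩ :=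
    exists_odd_natAbs_lt_mul_modEq_one_or_two h (by omega : 3 ≤ N)
  refine ⟨b.natAbs, Int.natAbs_odd.mpr hb_odd, hbN, ?_⟩
  have hangle : M * (b.natAbs * Real.pi / N) = |((M * b : ℤ) : ℝ) * Real.pi / N| := by
    rw [abs_div, abs_mul, Nat.abs_cast, abs_of_pos Real.pi_pos, Int.cast_mul, Int.cast_natCast,
      abs_mul, Nat.abs_cast, Nat.cast_natAbs, Int.cast_abs]
    ring
  have ht_nonneg : (0 : ℝ) ≤ t := by exact_mod_cast (by omega : 0 ≤ t)
  have htN : 2 * (t : ℝ) ≤ N := by exact_mod_cast (by omega : 2 * t ≤ N)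
  rw [hangle, Real.cos_abs, cos_mul_pi_div_eq_of_modEq (by omega) hbt]
  refine Real.cos_nonneg_of_neg_pi_div_two_le_of_le ?_ ?_
  · exact (by linarith [Real.pi_pos] : -(Real.pi / 2) ≤ 0).trans (by positivity)
  · rw [div_le_div_iff₀ (by positivity) two_pos]
    nlinarith [Real.pi_pos]

/-- The part of the open disc of radius `R` where `|arg w| > θ`, for `0 ≤ θ ≤ π`, written without
`arg` to avoid its discontinuity along the negative real axis, which lies inside the sector. -/
def truncatedSector (R θ : ℝ) : Set ℂ := {w | ‖w‖ < R ∧ w.re < ‖w‖ * Real.cos θ}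

lemma isOpen_truncatedSector (R θ : ℝ) : IsOpen (truncatedSector R θ) :=
  (isOpen_lt continuous_norm continuous_const).inter
    (isOpen_lt Complex.continuous_re (continuous_norm.mul continuous_const))

lemma isBounded_truncatedSector (R θ : ℝ) : Bornology.IsBounded (truncatedSector R θ) :=
  isBounded_iff_forall_norm_le.mpr ⟨R, fun _ hw => hw.1.le⟩

lemma one_notMem_truncatedSector (R θ : ℝ) : 1 ∉ truncatedSector R θ := fun h => by
  simpa using h.2.trans_le (mul_le_of_le_one_right (norm_nonneg _) (Real.cos_le_one θ))

lemma norm_eq_or_re_eq_of_mem_frontier_truncatedSector {R θ : ℝ} {w : ℂ}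
    (hw : w ∈ frontier (truncatedSector R θ)) : ‖w‖ = R ∨ w.re = ‖w‖ * Real.cos θ :=
  (frontier_inter_subset _ _ hw).imp
    (fun h => frontier_lt_subset_eq continuous_norm continuous_const h.1)
    (fun h => frontier_lt_subset_eq Complex.continuous_re
      (continuous_norm.mul continuous_const) h.2)

lemma exists_mem_truncatedSector_pow_eq_one {R : ℝ} (hR : 1 < R) {j N : ℕ} (hj : Odd j)
    (hjN : j < N) : ∃ w ∈ truncatedSector R (j * Real.pi / N), w ^ N = 1 := by
  have hN : (0 : ℝ) < N := by exact_mod_cast hj.pos.trans hjN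
  set φ : ℝ := (j + 1) * Real.pi / N with hφ
  have hnorm : ‖Complex.exp (φ * Complex.I)‖ = 1 := Complex.norm_exp_ofReal_mul_I φ
  refine ⟨Complex.exp (φ * Complex.I), ⟨hnorm.trans_lt hR, ?_⟩, ?_⟩
  · rw [hnorm, one_mul, Complex.exp_ofReal_mul_I_re]
    apply Real.cos_lt_cos_of_nonneg_of_le_pi (by positivity)
    · rw [hφ, div_le_iff₀ hN, mul_comm]
      gcongr
      exact_mod_cast hjN
    · rw [hφ]
      gcongr
      exact lt_add_one _
  · obtain ⟨b, hb⟩ := hj.add_one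
    have hangle : (N : ℂ) * (φ * Complex.I) = b * (2 * Real.pi * Complex.I) := by
      have hj1 : (j : ℂ) + 1 = b + b := by exact_mod_cast hb
      have hN0 : (N : ℂ) ≠ 0 := by exact_mod_cast hN.ne'
      rw [hφ]
      push_cast
      rw [hj1]
      field_simp
      ring
    rw [← Complex.exp_nat_mul, hangle, Complex.exp_nat_mul_two_pi_mul_I]

lemma re_pow_of_re_eq_norm_mul_cos {w : ℂ} {θ : ℝ} (h : w.re = ‖w‖ * Real.cos θ) (n : ℕ) :
    (w ^ n).re = ‖w‖ ^ n * Real.cos (n * θ) := by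
  rcases eq_or_ne w 0 with rfl | hw
  · rcases eq_or_ne n 0 with rfl | hn <;> simp [*]
  have hcos : Real.cos w.arg = Real.cos θ := by
    rw [Complex.cos_arg hw, h, mul_div_cancel_left₀ _ (norm_ne_zero_iff.mpr hw)]
  have hpow : w ^ n = (‖w‖ ^ n : ℝ) * Complex.exp ((n * w.arg : ℝ) * Complex.I) := by
    conv_lhs => rw [← w.norm_mul_exp_arg_mul_I, mul_pow, ← Complex.exp_nat_mul]
    push_cast
    rw [mul_assoc]
  have hcos_mul : Real.cos (n * w.arg) = Real.cos (n * θ) := by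
    have := congrArg (Polynomial.Chebyshev.T ℝ n).eval hcos
    simpa only [Polynomial.Chebyshev.T_real_cos, Int.cast_natCast] using this
  rw [hpow, Complex.re_ofReal_mul, Complex.exp_ofReal_mul_I_re, hcos_mul]

section FiberedJulia

variable {p : ℕ → ℝ}

lemma qF_zero_sq (hr : 0 < rr p 1) (z : ℂ) :
    qF p z 0 ^ 2 = rr p 1 • qF p z 1 + (1 - rr p 1) • 1 := by
  have hne : (p 2 : ℂ) ≠ 0 := by exact_mod_cast hr.ne'
  rw [show rr p 1 = p 2 from rfl, qF.eq_2, Complex.real_smul, Complex.real_smul]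
  push_cast
  field_simp
  ring

lemma isFibOrbit_qF (hr : ∀ n, 0 < rr p n) (z : ℂ) : IsFibOrbit (rr p) (qF p z) := by
  intro n
  have hne : (rr p (n + 2) : ℂ) ≠ 0 := by exact_mod_cast (hr (n + 2)).ne'
  rw [qF, Complex.real_smul, Complex.real_smul]
  push_cast
  field_simp
  ring

lemma differentiable_qF (p : ℕ → ℝ) (n : ℕ) : Differentiable ℂ fun z => qF p z n := by
  induction n using Nat.twoStepInduction with
  | zero => simp only [qF]; fun_prop
  | one => simp only [qF]; fun_prop
  | more n ih₀ ih₁ => simp only [qF]; fun_prop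

lemma qF_one (hp₁ : p 1 ≠ 0) (n : ℕ) : qF p 1 n = 1 := by
  have hp₁' : (p 1 : ℂ) ≠ 0 := by exact_mod_cast hp₁
  induction n using Nat.twoStepInduction with
  | zero => simp [qF, hp₁']
  | one => simp [qF, hp₁']
  | more n ih₀ ih₁ => simp [qF, ih₀, ih₁]

lemma one_mem_Eset (hp₁ : p 1 ≠ 0) : 1 ∈ Eset p :=
  ⟨1, fun n => by rw [qF_one hp₁, norm_one]⟩

lemma surjective_qF_zero (hp₁ : p 1 ≠ 0) : Function.Surjective fun z => qF p z 0 := by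
  have hp₁' : (p 1 : ℂ) ≠ 0 := by exact_mod_cast hp₁
  exact fun w => ⟨p 1 * w + (1 - p 1), by simp [qF, hp₁']⟩

lemma isBounded_preimage_qF_zero (hp₁ : p 1 ≠ 0) {s : Set ℂ} (hs : Bornology.IsBounded s) :
    Bornology.IsBounded ((fun z => qF p z 0) ⁻¹' s) := by
  have hp₁' : (p 1 : ℂ) ≠ 0 := by exact_mod_cast hp₁
  obtain ⟨R, hR⟩ := hs.exists_norm_le
  refine isBounded_iff_forall_norm_le.mpr ⟨‖(p 1 : ℂ)‖ * R + ‖(1 - p 1 : ℂ)‖, fun z hz => ?_⟩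
  have hz_eq : z = p 1 * qF p z 0 + (1 - p 1) := by rw [qF]; field_simp; ring
  calc ‖z‖ = ‖p 1 * qF p z 0 + (1 - p 1)‖ := congrArg _ hz_eq
    _ ≤ ‖(p 1 : ℂ)‖ * ‖qF p z 0‖ + ‖(1 - p 1 : ℂ)‖ := norm_add_le_of_le (norm_mul_le _ _) le_rfl
    _ ≤ _ := by gcongr; exact hR _ hz

lemma qF_eq_pow_fib (hr : ∀ n, 0 < rr p n) {m : ℕ} (h : ∀ i, 1 ≤ i → i ≤ m → rr p i = 1) (z : ℂ)
    {n : ℕ} (hn : n ≤ m) : qF p z n = qF p z 0 ^ Nat.fib (n + 2) := by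
  induction n using Nat.twoStepInduction with
  | zero => simp
  | one =>
    have hsq := qF_zero_sq (hr 1) z
    rw [h 1 le_rfl hn, one_smul, sub_self, zero_smul, add_zero] at hsq
    exact hsq.symm
  | more n ih₀ ih₁ =>
    have hmul := isFibOrbit_qF hr z n
    rw [h (n + 2) (by omega) hn, one_smul, sub_self, zero_smul, add_zero, ih₀ (by omega),
      ih₁ (by omega), ← pow_add, add_comm, ← Nat.fib_add_two (n := n + 2)] at hmul
    exact hmul.symm

lemma one_lt_norm_qF (hr : ∀ n, 0 < rr p n ∧ rr p n ≤ 1) {z : ℂ} (hz : 1 < ‖qF p z 0‖) (n : ℕ) :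
    1 < ‖qF p z n‖ := by
  have hsq : 1 < ‖qF p z 0 ^ 2‖ := by rw [norm_pow]; exact one_lt_pow₀ hz two_ne_zero
  have hone : 1 < ‖qF p z 1‖ := hsq.trans_le
    (norm_le_norm_of_eq_smul_add_smul_one (hr 1) (qF_zero_sq (hr 1).1 z) hsq.le)
  exact (isFibOrbit_qF (fun n => (hr n).1) z).one_lt_norm_of_le hr hz hone n.zero_le

lemma one_lt_norm_qF_of_mem_frontier (hr : ∀ n, 0 < rr p n ∧ rr p n ≤ 1) {m : ℕ}
    (hone : ∀ i, 1 ≤ i → i ≤ m + 1 → rr p i = 1) (h₂ : rr p (m + 2) < 1 / 2)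
    (h₃ : rr p (m + 3) < 1 / 2) {R θ : ℝ} (hR : 1 < R) (hN : Real.cos (Nat.fib (m + 4) * θ) = -1)
    (hM : 0 ≤ Real.cos (Nat.fib (m + 3) * θ)) {z : ℂ}
    (hz : z ∈ frontier ((fun z => qF p z 0) ⁻¹' truncatedSector R θ)) :
    1 < ‖qF p z (m + 2)‖ ∧ 1 < ‖qF p z (m + 3)‖ := by
  rcases norm_eq_or_re_eq_of_mem_frontier_truncatedSector
    ((differentiable_qF p 0).continuous.frontier_preimage_subset _ hz) with hnorm | hre
  · have hlarge : 1 < ‖qF p z 0‖ := hR.trans_eq hnorm.symm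
    exact ⟨one_lt_norm_qF hr hlarge _, one_lt_norm_qF hr hlarge _⟩
  set w := qF p z 0
  have hprod : qF p z (m + 1) * qF p z m = w ^ Nat.fib (m + 4) := by
    rw [qF_eq_pow_fib (fun n => (hr n).1) hone z le_rfl,
      qF_eq_pow_fib (fun n => (hr n).1) hone z m.le_succ, ← pow_add,
      Nat.fib_add_two (n := m + 2), add_comm]
  have hwN : (w ^ Nat.fib (m + 4)).re = -‖w ^ Nat.fib (m + 4)‖ := by
    rw [re_pow_of_re_eq_norm_mul_cos hre, hN, norm_pow, mul_neg_one]
  refine (isFibOrbit_qF (fun n => (hr n).1) z).one_lt_norm_of_mul_re_nonpos (fun n => (hr n).1)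
    h₂ h₃ ?_ ?_ ?_
  · rw [hprod, hwN]
    exact neg_nonpos.mpr (norm_nonneg _)
  · rw [hprod]
    exact Complex.abs_re_eq_norm.mp (by rw [hwN, abs_neg, abs_norm])
  · rw [qF_eq_pow_fib (fun n => (hr n).1) hone z le_rfl, re_pow_of_re_eq_norm_mul_cos hre]
    positivity

lemma exists_mem_preimage_truncatedSector_qF_eq_one (hr : ∀ n, 0 < rr p n) (hp₁ : p 1 ≠ 0) {m : ℕ}
    (hone : ∀ i, 1 ≤ i → i ≤ m + 1 → rr p i = 1) {R : ℝ} (hR : 1 < R) {j : ℕ} (hj : Odd j)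
    (hjN : j < Nat.fib (m + 4)) :
    ∃ z ∈ (fun z => qF p z 0) ⁻¹' truncatedSector R (j * Real.pi / Nat.fib (m + 4)),
      qF p z (m + 2) = 1 := by
  obtain ⟨w, hw, hwN⟩ := exists_mem_truncatedSector_pow_eq_one hR hj hjN
  obtain ⟨z, rfl⟩ := surjective_qF_zero hp₁ w
  refine ⟨z, hw, ?_⟩
  rw [qF, mul_assoc, qF_eq_pow_fib hr hone z le_rfl, qF_eq_pow_fib hr hone z m.le_succ, ← pow_add,
    add_comm (Nat.fib _), ← Nat.fib_add_two, hwN]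
  ring

lemma exists_pos_eventually_le_rr (hp : ∀ i, 1 ≤ i → 0 ≤ p i) (hlim : 0 < liminf p atTop) :
    ∃ c : ℝ, 0 < c ∧ ∀ᶠ n in atTop, c ≤ rr p n := by
  obtain ⟨c, hc, hc_lt⟩ := exists_between hlim
  have hbdd : IsBoundedUnder (· ≥ ·) atTop p :=
    isBoundedUnder_of_eventually_ge ((eventually_ge_atTop 1).mono hp)
  have hindex : Tendsto (fun n : ℕ => (n + 1) / 2 + 1) atTop atTop :=
    tendsto_atTop.mpr fun b => (eventually_ge_atTop (2 * b)).mono fun n hn => by omega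
  exact ⟨c, hc, (hindex.eventually (eventually_lt_of_lt_liminf hc_lt hbdd)).mono fun _ => le_of_lt⟩

lemma not_isConnected_Eset_of_cos_nonneg (hr : ∀ n, 0 < rr p n ∧ rr p n ≤ 1)
    (hp₁ : p 1 ≠ 0) {c : ℝ} (hc : 0 < c) (hcr : ∀ᶠ n in atTop, c ≤ rr p n) {m : ℕ}
    (hone : ∀ i, 1 ≤ i → i ≤ m + 1 → rr p i = 1) (h₂ : rr p (m + 2) < 1 / 2)
    (h₃ : rr p (m + 3) < 1 / 2) {j : ℕ} (hj : Odd j) (hjN : j < Nat.fib (m + 4))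
    (hM : 0 ≤ Real.cos (Nat.fib (m + 3) * (j * Real.pi / Nat.fib (m + 4)))) :
    ¬IsConnected (Eset p) := by
  intro hconn
  have hr_pos (n : ℕ) : 0 < rr p n := (hr n).1
  set Ω := (fun z => qF p z 0) ⁻¹' truncatedSector 2 (j * Real.pi / Nat.fib (m + 4))
  have hN : Real.cos (Nat.fib (m + 4) * (j * Real.pi / Nat.fib (m + 4))) = -1 := by
    have hN₀ : (Nat.fib (m + 4) : ℝ) ≠ 0 := by exact_mod_cast (hj.pos.trans hjN).ne'
    rw [mul_div_cancel₀ _ hN₀, Real.cos_nat_mul_pi, hj.neg_one_pow]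
  have hfr : ∀ z ∈ frontier Ω, 1 < ‖qF p z (m + 2)‖ ∧ 1 < ‖qF p z (m + 3)‖ := fun _ hz =>
    one_lt_norm_qF_of_mem_frontier hr hone h₂ h₃ one_lt_two hN hM hz
  have hdisj : Disjoint (Eset p) (frontier Ω) := Set.disjoint_right.mpr fun z hz =>
    (isFibOrbit_qF hr_pos z).not_bounded_of_one_lt_norm hr (hfr z hz).1 (hfr z hz).2
  have hsmall : ∃ z ∈ Ω, ‖qF p z (m + 2)‖ ≤ 1 :=
    (exists_mem_preimage_truncatedSector_qF_eq_one hr_pos hp₁ hone one_lt_two hj hjN).imp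
      fun z hz => ⟨hz.1, by rw [hz.2, norm_one]⟩
  obtain ⟨z, hzΩ, hzE⟩ : ∃ z ∈ Ω, z ∈ Eset p :=
    IsFibOrbit.exists_mem_bounded (isFibOrbit_qF hr_pos) hr (differentiable_qF p) hc hcr
      ((isOpen_truncatedSector _ _).preimage (differentiable_qF p 0).continuous)
      (isBounded_preimage_qF_zero hp₁ (isBounded_truncatedSector _ _)) hfr hsmall
  have hsub : Eset p ⊆ Ω := subset_of_isPreconnected_of_disjoint_frontier hconn.isPreconnected hdisj
    ⟨z, hzE, hzΩ⟩
  have hone_mem : qF p 1 0 ∈ truncatedSector 2 _ := hsub (one_mem_Eset hp₁)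
  rw [qF_one hp₁] at hone_mem
  exact one_notMem_truncatedSector _ _ hone_mem

end FiberedJulia

/-- Suppose `liminf p i > 0`.  If there is `k ≥ 2` with `p i = 1` for
all `2 ≤ i ≤ k` and `p (k+1) < 1/2`, then `E` is not connected. -/
theorem stmt19 (p : ℕ → ℝ) (hp : ∀ i, 1 ≤ i → 0 < p i ∧ p i ≤ 1)
    (hlim : 0 < Filter.liminf p Filter.atTop)
    (k : ℕ) (hk : 2 ≤ k) (hone : ∀ i, 2 ≤ i → i ≤ k → p i = 1)
    (hk1 : p (k+1) < 1/2) :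
    ¬ IsConnected (Eset p) := by
  obtain ⟨l, rfl⟩ := Nat.exists_eq_add_of_le' hk
  set m := 2 * l + 1
  have hp₁ : p 1 ≠ 0 := (hp 1 le_rfl).1.ne'
  have hr (n : ℕ) : 0 < rr p n ∧ rr p n ≤ 1 := hp _ (by omega)
  have hr_one (i : ℕ) (h₁ : 1 ≤ i) (hi : i ≤ m + 1) : rr p i = 1 := hone _ (by omega) (by omega)
  have hr₂ : rr p (m + 2) < 1 / 2 := by rwa [rr, show (m + 2 + 1) / 2 = l + 2 by omega]
  have hr₃ : rr p (m + 3) < 1 / 2 := by rwa [rr, show (m + 3 + 1) / 2 = l + 2 by omega]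
  obtain ⟨c, hc, hcr⟩ := exists_pos_eventually_le_rr (fun i hi => (hp i hi).1.le) hlim
  have hN : 4 ≤ Nat.fib (m + 4) := (by decide : 4 ≤ Nat.fib 5).trans (Nat.fib_mono (by omega))
  obtain ⟨j, hj, hjN, hM⟩ := exists_odd_lt_cos_nonneg (Nat.fib_coprime_fib_succ (m + 3)) hN
  exact not_isConnected_Eset_of_cos_nonneg hr hp₁ hc hcr hr_one hr₂ hr₃ hj hjN hM
end
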